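/- Every quasidisk satisfies the (A)-condition: if f is a quasiconformal mapping of ℂ onto itself and D = f(𝔻) is the image of the unit disc, then there exist Θ_0, ρ_0 ∈ (0,1) such that m(D ∩ B(ζ, ρ)) ≤ Θ_0·m(B(ζ, ρ)) for all ζ ∈ ∂D and all ρ ≤ ρ_0. -/

import Mathlib

open Complex Metric MeasureTheory Filter Topology Set
open scoped ENNReal NNReal

noncomputable section

/-- The supremum of products of mutual distances of `n`-tuples of points of `E`
(the quantity `V_n` in the definition of the transfinite diameter). -/
noncomputable def diamProd (E : Set ℂ) (n : ℕ) : ℝ≥0∞ :=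
  ⨆ (z : Fin n → ℂ) (_ : ∀ i, z i ∈ E),
    ∏ p ∈ Finset.univ.filter (fun p : Fin n × Fin n => p.1 < p.2), edist (z p.1) (z p.2)

/-- The logarithmic capacity of a (bounded) set, defined as its transfinite diameter
`lim_n V_n^{2/(n(n-1))}` (realized via `limsup`). -/
noncomputable def logCap (E : Set ℂ) : ℝ≥0∞ :=
  Filter.limsup (fun n : ℕ => diamProd E n ^ ((2 : ℝ) / ((n : ℝ) * ((n : ℝ) - 1))))
    Filter.atTop

/-- A set is measurable with respect to logarithmic capacity if its inner capacity
(sup of capacities of compact subsets) equals its outer capacity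
(inf of capacities of open supersets). -/
def CapMeasurableSet (E : Set ℂ) : Prop :=
  (⨆ (F : Set ℂ) (_ : IsCompact F) (_ : F ⊆ E), logCap F) =
    (⨅ (U : Set ℂ) (_ : IsOpen U) (_ : E ⊆ U), logCap U)

/-- A function defined on `E ⊆ ℂ` is measurable with respect to logarithmic capacity if
preimages of open sets are measurable with respect to logarithmic capacity. -/
def CapMeasFunOn {X : Type*} [TopologicalSpace X] (E : Set ℂ) (f : ℂ → X) : Prop :=
  ∀ O : Set X, IsOpen O → CapMeasurableSet {z | z ∈ E ∧ f z ∈ O}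

/-- `P` holds quasi-everywhere on `E`: the exceptional set has logarithmic capacity zero. -/
def QEOn (E : Set ℂ) (P : ℂ → Prop) : Prop :=
  logCap {z | z ∈ E ∧ ¬ P z} = 0

/-- The unit circle `∂𝔻`. -/
def unitCircle : Set ℂ := Metric.sphere 0 1

/-- Variation of `f` along the parametrized arc `p` over parameters in `I`. -/
noncomputable def varAlong {E : Type*} [SeminormedAddCommGroup E]
    (f : ℂ → E) (p : ℝ → ℂ) (I : Set ℝ) : ℝ≥0∞ :=
  ⨆ (k : ℕ) (t : Fin (k + 1) → ℝ) (_ : Monotone t) (_ : ∀ i, t i ∈ I),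
    ∑ i : Fin k, (‖f (p (t i.succ)) - f (p (t i.castSucc))‖₊ : ℝ≥0∞)

/-- Cyclic variation of `f` on the unit circle: the supremum of
`∑ⱼ ‖f(ζ_{j+1}) - f(ζ_j)‖` over all finite collections of points of `∂𝔻` in cyclic order
(realized by monotone angle parameters running over at most one full turn). -/
noncomputable def circleVar {E : Type*} [SeminormedAddCommGroup E] (f : ℂ → E) : ℝ≥0∞ :=
  ⨆ (k : ℕ) (t : Fin (k + 1) → ℝ) (_ : Monotone t)
    (_ : t (Fin.last k) ≤ t 0 + 2 * Real.pi),
    ∑ i : Fin k, (‖f (circleMap 0 1 (t i.succ)) - f (circleMap 0 1 (t i.castSucc))‖₊ : ℝ≥0∞)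

/-- `A` is a subarc of the curve `Γ` on which `f` has bounded variation. -/
def IsBVArcOn {E : Type*} [SeminormedAddCommGroup E] (f : ℂ → E) (Γ A : Set ℂ) : Prop :=
  A ⊆ Γ ∧ ∃ (p : ℝ → ℂ) (I : Set ℝ), I.OrdConnected ∧ ContinuousOn p I ∧
    Set.InjOn p I ∧ p '' I = A ∧ varAlong f p I < ⊤

/-- `f` is of countable bounded variation on the curve `Γ`: there are countably many
mutually disjoint arcs of `Γ` on each of which `f` has bounded variation, whose complement
in `Γ` has logarithmic capacity zero. -/
def CBVOn {E : Type*} [SeminormedAddCommGroup E] (f : ℂ → E) (Γ : Set ℂ) : Prop :=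
  ∃ γ : ℕ → Set ℂ, (Pairwise fun m n => Disjoint (γ m) (γ n)) ∧
    (∀ n, IsBVArcOn f Γ (γ n)) ∧ logCap (Γ \ ⋃ n, γ n) = 0

/-- The open sector (angle) with vertex `ζ`, direction `e` and half-opening `a`. -/
def Sector (ζ e : ℂ) (a : ℝ) : Set ℂ :=
  {z | z ≠ ζ ∧ |Complex.arg ((z - ζ) / e)| < a}

/-- `f` has angular (nontangential) limit `L` at the boundary point `ζ` of `D`:
along every angle with vertex `ζ` lying in `D` near `ζ`, `f` tends to `L`. -/
def AngularLimit {X : Type*} [TopologicalSpace X] (f : ℂ → X) (D : Set ℂ) (ζ : ℂ)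
    (L : X) : Prop :=
  ∀ (e : ℂ) (a r : ℝ), e ≠ 0 → 0 < a → a < Real.pi / 2 → 0 < r →
    Sector ζ e a ∩ Metric.ball ζ r ⊆ D →
    Filter.Tendsto f (𝓝[Sector ζ e a ∩ Metric.ball ζ r] ζ) (𝓝 L)

/-- `u` is harmonic on `D`. -/
def IsHarmonicOn (u : ℂ → ℝ) (D : Set ℂ) : Prop :=
  ContDiffOn ℝ 2 u D ∧ ∀ z ∈ D,
    fderiv ℝ (fun w => fderiv ℝ u w 1) z 1
      + fderiv ℝ (fun w => fderiv ℝ u w Complex.I) z Complex.I = 0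

/-- The curve `Γ` has tangent line at `ζ` in the direction `e`. -/
def HasTangentVia (Γ : Set ℂ) (ζ e : ℂ) : Prop :=
  e ≠ 0 ∧ Filter.Tendsto
    (fun z => Metric.infDist z {w : ℂ | ∃ t : ℝ, w = ζ + t • e} / ‖z - ζ‖)
    (𝓝[Γ \ {ζ}] ζ) (𝓝 0)

/-- The curve `Γ` has a tangent at `ζ`. -/
def HasTangentAt (Γ : Set ℂ) (ζ : ℂ) : Prop := ∃ e : ℂ, HasTangentVia Γ ζ e

/-- `D` is a Jordan domain: a bounded domain whose boundary is a Jordan curve. -/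
def IsJordanDomain (D : Set ℂ) : Prop :=
  IsOpen D ∧ IsConnected D ∧ Bornology.IsBounded D ∧
    Nonempty ((Metric.sphere (0 : ℂ) 1) ≃ₜ (frontier D))

/-- The quasihyperbolic distance in `D`: the infimum of `∫ ds / d(ζ, ∂D)` over
(rectifiable, here Lipschitz-parametrized) curves joining `z` and `w` in `D`. -/
noncomputable def qhDist (D : Set ℂ) (z w : ℂ) : ℝ :=
  sInf {L : ℝ | ∃ γ : ℝ → ℂ, (∃ K : ℝ≥0, LipschitzOnWith K γ (Set.Icc 0 1)) ∧
    (∀ t ∈ Set.Icc (0 : ℝ) 1, γ t ∈ D) ∧ γ 0 = z ∧ γ 1 = w ∧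
    L = ∫ t in (0 : ℝ)..1, ‖deriv γ t‖ / Metric.infDist (γ t) (frontier D)}

/-- `D` satisfies the quasihyperbolic boundary condition. -/
def QHBC (D : Set ℂ) : Prop :=
  ∃ (a b : ℝ) (z₀ : ℂ), z₀ ∈ D ∧ ∀ z ∈ D,
    qhDist D z z₀ ≤
      a * Real.log (Metric.infDist z₀ (frontier D) / Metric.infDist z (frontier D)) + b

/-- `D` satisfies the (A)-condition of Ladyzhenskaya–Ural'tseva. -/
def ACondition (D : Set ℂ) : Prop :=
  ∃ Θ₀ ∈ Set.Ioo (0 : ℝ) 1, ∃ ρ₀ ∈ Set.Ioo (0 : ℝ) 1,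
    ∀ ζ ∈ frontier D, ∀ ρ : ℝ, 0 < ρ → ρ ≤ ρ₀ →
      volume (D ∩ Metric.ball ζ ρ) ≤ ENNReal.ofReal Θ₀ * volume (Metric.ball ζ ρ)

/-- `g₁, g₂` are the first generalized (weak) partial derivatives of `f` on `D`. -/
def HasWeakPartialsOn (f g₁ g₂ : ℂ → ℂ) (D : Set ℂ) : Prop :=
  MeasureTheory.LocallyIntegrableOn f D volume ∧
  MeasureTheory.LocallyIntegrableOn g₁ D volume ∧
  MeasureTheory.LocallyIntegrableOn g₂ D volume ∧
  ∀ φ : ℂ → ℝ, ContDiff ℝ (⊤ : ℕ∞) φ → HasCompactSupport φ → tsupport φ ⊆ D →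
    (∫ z in D, f z * (fderiv ℝ φ z 1 : ℂ)) = -(∫ z in D, g₁ z * (φ z : ℂ)) ∧
    (∫ z in D, f z * (fderiv ℝ φ z Complex.I : ℂ)) = -(∫ z in D, g₂ z * (φ z : ℂ))

/-- `f` is a regular solution of the Beltrami equation `f_z̄ = μ f_z` on `D`:
continuous, discrete, open, with first generalized derivatives satisfying the
equation almost everywhere. -/
def IsRegularBeltramiSolution (μ : ℂ → ℂ) (f : ℂ → ℂ) (D : Set ℂ) : Prop :=
  ContinuousOn f D ∧
  (∀ w : ℂ, ∀ z ∈ D, f z = w → 𝓝[(D ∩ f ⁻¹' {w}) \ {z}] z = ⊥) ∧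
  (∀ U : Set ℂ, U ⊆ D → IsOpen U → IsOpen (f '' U)) ∧
  ∃ g₁ g₂ : ℂ → ℂ, HasWeakPartialsOn f g₁ g₂ D ∧
    ∀ᵐ z ∂(volume.restrict D),
      (g₁ z + Complex.I * g₂ z) / 2 = μ z * ((g₁ z - Complex.I * g₂ z) / 2)

/-- `f` is a quasiconformal mapping of `ℂ` onto itself: a homeomorphism of the plane
with locally square-integrable first generalized derivatives satisfying a nondegenerate
Beltrami equation a.e. -/
def IsQCOfPlane (f : ℂ → ℂ) : Prop :=
  (∃ F : ℂ ≃ₜ ℂ, ⇑F = f) ∧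
  ∃ g₁ g₂ : ℂ → ℂ, HasWeakPartialsOn f g₁ g₂ Set.univ ∧
    (∀ K : Set ℂ, IsCompact K →
      MeasureTheory.IntegrableOn (fun z => ‖g₁ z‖ ^ 2) K volume ∧
      MeasureTheory.IntegrableOn (fun z => ‖g₂ z‖ ^ 2) K volume) ∧
    ∃ μ : ℂ → ℂ, Measurable μ ∧ (∃ k : ℝ, k < 1 ∧ ∀ᵐ z ∂volume, ‖μ z‖ ≤ k) ∧
      ∀ᵐ z ∂volume,
        (g₁ z + Complex.I * g₂ z) / 2 = μ z * ((g₁ z - Complex.I * g₂ z) / 2)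

/-- The gradient of `u : ℂ → ℝ` as a vector in `ℝ²`. -/
noncomputable def gradVec (u : ℂ → ℝ) (z : ℂ) : Fin 2 → ℝ :=
  ![fderiv ℝ u z 1, fderiv ℝ u z Complex.I]

/-- `g` is the weak (generalized) gradient of `u` on `D`. -/
def HasWeakGradOn (u : ℂ → ℝ) (g : ℂ → Fin 2 → ℝ) (D : Set ℂ) : Prop :=
  MeasureTheory.LocallyIntegrableOn u D volume ∧
  MeasureTheory.LocallyIntegrableOn g D volume ∧
  ∀ φ : ℂ → ℝ, ContDiff ℝ (⊤ : ℕ∞) φ → HasCompactSupport φ → tsupport φ ⊆ D →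
    (∫ z in D, u z * fderiv ℝ φ z 1) = -(∫ z in D, g z 0 * φ z) ∧
    (∫ z in D, u z * fderiv ℝ φ z Complex.I) = -(∫ z in D, g z 1 * φ z)

/-- The class `𝓑` of symmetric, measurable, essentially bounded, uniformly elliptic
matrix functions with determinant identically `1` on `D`. -/
def InClassB (A : ℂ → Matrix (Fin 2) (Fin 2) ℝ) (D : Set ℂ) : Prop :=
  (∀ i j, Measurable fun z => A z i j) ∧
  (∀ z ∈ D, (A z).IsSymm) ∧
  (∀ z ∈ D, (A z).det = 1) ∧
  (∃ M : ℝ, ∀ᵐ z ∂(volume.restrict D), ∀ i j, |A z i j| ≤ M) ∧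
  (∃ ε : ℝ, 0 < ε ∧ ∀ z ∈ D, ∀ η : Fin 2 → ℝ,
    ε * (η 0 ^ 2 + η 1 ^ 2) ≤ ∑ i, (A z).mulVec η i * η i)

/-- `u` is `A`-harmonic on `D` (continuous weak solution of `div(A ∇u) = 0`). -/
def IsAHarmonicOn (A : ℂ → Matrix (Fin 2) (Fin 2) ℝ) (u : ℂ → ℝ) (D : Set ℂ) : Prop :=
  ContinuousOn u D ∧ ∃ g : ℂ → Fin 2 → ℝ, HasWeakGradOn u g D ∧
    ∀ φ : ℂ → ℝ, ContDiff ℝ (⊤ : ℕ∞) φ → HasCompactSupport φ → tsupport φ ⊆ D →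
      (∫ z in D, ∑ i, (A z).mulVec (g z) i * gradVec φ z i) = 0

/-- `u` of class `C¹` is `A`-harmonic on `D`. -/
def IsAHarmonicC1On (A : ℂ → Matrix (Fin 2) (Fin 2) ℝ) (u : ℂ → ℝ) (D : Set ℂ) : Prop :=
  ContDiffOn ℝ 1 u D ∧
    ∀ φ : ℂ → ℝ, ContDiff ℝ (⊤ : ℕ∞) φ → HasCompactSupport φ → tsupport φ ⊆ D →
      (∫ z in D, ∑ i, (A z).mulVec (gradVec u z) i * gradVec φ z i) = 0

/-- `u` is of class `C^{1+α}` on `D`: continuously differentiable with locally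
`α`-Hölder continuous partial derivatives. -/
def IsC1HolderOn (u : ℂ → ℝ) (α : ℝ≥0) (D : Set ℂ) : Prop :=
  ContDiffOn ℝ 1 u D ∧ ∀ z ∈ D, ∃ r > (0 : ℝ), ∃ C : ℝ≥0,
    HolderOnWith C α (fun w => gradVec u w) (D ∩ Metric.ball z r)

/-- The entries of the matrix function `A` are locally `α`-Hölder continuous on `D`. -/
def EntriesLocHolderOn (A : ℂ → Matrix (Fin 2) (Fin 2) ℝ) (α : ℝ≥0) (D : Set ℂ) : Prop :=
  ∀ z ∈ D, ∃ r > (0 : ℝ), ∃ C : ℝ≥0, ∀ i j,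
    HolderOnWith C α (fun w => A w i j) (D ∩ Metric.ball z r)

/-- `n` is the interior unit normal to `∂D` at `ζ`: a unit vector orthogonal to a
tangent direction of `∂D` at `ζ` and pointing into `D`. -/
def IsInteriorNormalAt (D : Set ℂ) (ζ n : ℂ) : Prop :=
  ‖n‖ = 1 ∧
  (∃ e : ℂ, HasTangentVia (frontier D) ζ e ∧ (n * (starRingEnd ℂ) e).re = 0) ∧
  ∃ ε > (0 : ℝ), ∀ t : ℝ, 0 < t → t < ε → ζ + t • n ∈ D

end

/-!
A quasiconformal homeomorphism `G` has a derivative `D` in `L²_loc`, and mollifying `G` gives smooth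
maps converging locally uniformly with derivatives converging in `L²_loc`. Since `dη(G) ∧ dG` is
exact, the Jacobian of `G` transports to a constant multiple of Lebesgue measure, and the Beltrami
equation bounds `‖D‖²` by a multiple of the Jacobian. Hence the energy of `T ∘ G` over `A` is at
most `C` times the energy of `T` over `G '' A`.

By the length-area method this energy controls oscillation on circles and rays. Applied to
`T = log ‖· - G ξ‖`, truncated, it shows that `G` maps circles about `ξ` to curves of bounded
eccentricity about `G ξ`; applied to `G`, it shows that `G` shrinks a much smaller concentric circle
substantially. So for `ξ` on the unit circle, with `s` maximal such that `G '' ball ξ s` lies in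
`ball (G ξ) ρ`, each segment from the circle of radius `s / k` to that of radius `s` has an image of
length at least `ε ρ`. The segments in the half-disc outside the unit disc sweep out energy, hence
image area, comparable to `ρ²`, and this area is missing from the quasidisk.
-/

open ContinuousLinearMap Function
open scoped Convolution ContDiff Real ComplexConjugate

section Mollification

variable {E F : Type*} [NormedAddCommGroup E] [NormedSpace ℝ E] [FiniteDimensional ℝ E]
  [MeasurableSpace E] [BorelSpace E] {μ : Measure E} [NormedAddCommGroup F] {p : ℝ≥0∞} {f : E → F}

theorem tendsto_eLpNorm_comp_sub_sub [μ.IsAddHaarMeasure] (hp : 1 ≤ p)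
    (hp' : p ≠ ⊤) (hf : MemLp f p μ) :
    Tendsto (fun h ↦ eLpNorm (fun x ↦ f (x - h) - f x) p μ) (𝓝 0) (𝓝 0) := by
  have : Fact (1 ≤ p) := ⟨hp⟩
  have : Fact (p ≠ ⊤) := ⟨hp'⟩
  have hcont : Continuous fun h : E ↦ DomAddAct.mk (-h) +ᵥ hf.toLp f :=
    (DomAddAct.continuous_mk.comp continuous_neg).vadd continuous_const
  refine (tendsto_iff_edist_tendsto_0.1 (hcont.tendsto 0)).congr fun h ↦ ?_
  rw [DomAddAct.mk_vadd_toLp, DomAddAct.mk_vadd_toLp, Lp.edist_toLp_toLp]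
  congr 1
  ext x
  simp [sub_eq_neg_add]

variable [NormedSpace ℝ F]

theorem integral_withDensity_normed (φ : ContDiffBump (0 : E)) (g : E → F) :
    ∫ t, g t ∂μ.withDensity (fun t ↦ ENNReal.ofReal (φ.normed μ t)) =
      ∫ t, φ.normed μ t • g t ∂μ := by
  rw [integral_withDensity_eq_integral_toReal_smul
    φ.continuous_normed.measurable.ennreal_ofReal (.of_forall fun _ ↦ ENNReal.ofReal_lt_top)]
  simp [ENNReal.toReal_ofReal, φ.nonneg_normed]

theorem eLpNorm_integral_le_of_ae_le {α T : Type*} [MeasurableSpace α] [MeasurableSpace T]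
    {ν : Measure α} [SFinite ν] {P : Measure T} [IsProbabilityMeasure P] (hp : 1 ≤ p)
    (hp' : p ≠ ⊤) {k : α → T → F} (hk : AEStronglyMeasurable (uncurry k) (ν.prod P)) {ε : ℝ≥0∞}
    (hε : ∀ᵐ t ∂P, eLpNorm (k · t) p ν ≤ ε) :
    eLpNorm (fun x ↦ ∫ t, k x t ∂P) p ν ≤ ε := by
  lift p to ℝ≥0 using hp'
  have hp₀ : p ≠ 0 := fun h ↦ by simp [h] at hp
  have jensen : ∀ᵐ x ∂ν, ‖∫ t, k x t ∂P‖ₑ ^ (p : ℝ) ≤ ∫⁻ t, ‖k x t‖ₑ ^ (p : ℝ) ∂P := by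
    filter_upwards [hk.prodMk_left] with x hx
    rw [← eLpNorm_nnreal_pow_eq_lintegral hp₀]
    gcongr
    calc ‖∫ t, k x t ∂P‖ₑ ≤ eLpNorm (k x) 1 P := by
          rw [eLpNorm_one_eq_lintegral_enorm]; exact enorm_integral_le_lintegral_enorm _
      _ ≤ eLpNorm (k x) p P := eLpNorm_le_eLpNorm_of_exponent_le hp hx
  rw [← ENNReal.rpow_le_rpow_iff (NNReal.coe_pos.2 hp₀.bot_lt), eLpNorm_nnreal_pow_eq_lintegral hp₀]
  calc ∫⁻ x, ‖∫ t, k x t ∂P‖ₑ ^ (p : ℝ) ∂ν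
      ≤ ∫⁻ x, ∫⁻ t, ‖k x t‖ₑ ^ (p : ℝ) ∂P ∂ν := lintegral_mono_ae jensen
    _ = ∫⁻ t, ∫⁻ x, ‖k x t‖ₑ ^ (p : ℝ) ∂ν ∂P := lintegral_lintegral_swap (hk.enorm.pow_const _)
    _ ≤ ∫⁻ _, ε ^ (p : ℝ) ∂P := lintegral_mono_ae <| hε.mono fun t ht ↦ by
        rw [← eLpNorm_nnreal_pow_eq_lintegral hp₀]; gcongr
    _ = ε ^ (p : ℝ) := by simp

variable [μ.IsAddHaarMeasure]

theorem isProbabilityMeasure_withDensity_normed (φ : ContDiffBump (0 : E)) :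
    IsProbabilityMeasure (μ.withDensity fun t ↦ ENNReal.ofReal (φ.normed μ t)) := by
  refine ⟨?_⟩
  rw [withDensity_apply _ .univ, setLIntegral_univ, ← ofReal_integral_eq_lintegral_ofReal
    φ.integrable_normed (.of_forall φ.nonneg_normed), φ.integral_normed, ENNReal.ofReal_one]

theorem convolution_normed_sub [CompleteSpace F] (φ : ContDiffBump (0 : E))
    (hf : LocallyIntegrable f μ) (x : E) :
    (φ.normed μ ⋆[lsmul ℝ ℝ, μ] f) x - f x = ∫ t, φ.normed μ t • (f (x - t) - f x) ∂μ := by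
  have hconv : Integrable (fun t ↦ φ.normed μ t • f (x - t)) μ :=
    φ.hasCompactSupport_normed.convolutionExists_left (lsmul ℝ ℝ) φ.continuous_normed hf x
  simp_rw [smul_sub]
  rw [integral_sub hconv (φ.integrable_normed.smul_const _), φ.integral_normed_smul]
  rfl

theorem eLpNorm_convolution_normed_sub_le [CompleteSpace F] (hp : 1 ≤ p) (hp' : p ≠ ⊤)
    (φ : ContDiffBump (0 : E)) (hf : LocallyIntegrable f μ) {ε : ℝ≥0∞}
    (hε : ∀ t ∈ ball (0 : E) φ.rOut, eLpNorm (fun x ↦ f (x - t) - f x) p μ ≤ ε) :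
    eLpNorm (fun x ↦ (φ.normed μ ⋆[lsmul ℝ ℝ, μ] f) x - f x) p μ ≤ ε := by
  have := isProbabilityMeasure_withDensity_normed (μ := μ) φ
  set P := μ.withDensity fun t ↦ ENNReal.ofReal (φ.normed μ t)
  have hmeas : AEStronglyMeasurable (uncurry fun x t ↦ f (x - t) - f x) (μ.prod P) :=
    (hf.aestronglyMeasurable.comp_quasiMeasurePreserving
      (quasiMeasurePreserving_sub_of_right_invariant μ P)).sub hf.aestronglyMeasurable.comp_fst
  have hsupp : ∀ᵐ t ∂P, t ∈ ball (0 : E) φ.rOut := by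
    rw [ae_withDensity_iff φ.continuous_normed.measurable.ennreal_ofReal]
    refine .of_forall fun t ht ↦ ?_
    rw [← φ.support_normed_eq (μ := μ)]
    exact fun h0 ↦ ht (by rw [h0, ENNReal.ofReal_zero])
  simp_rw [convolution_normed_sub φ hf, ← integral_withDensity_normed φ]
  exact eLpNorm_integral_le_of_ae_le hp hp' hmeas (hsupp.mono fun t ht ↦ hε t ht)

theorem tendsto_eLpNorm_convolution_normed_sub [CompleteSpace F] {ι : Type*} {l : Filter ι}
    {φ : ι → ContDiffBump (0 : E)} (hφ : Tendsto (fun i ↦ (φ i).rOut) l (𝓝 0)) (hp : 1 ≤ p)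
    (hp' : p ≠ ⊤) (hf : MemLp f p μ) :
    Tendsto (fun i ↦ eLpNorm (fun x ↦ ((φ i).normed μ ⋆[lsmul ℝ ℝ, μ] f) x - f x) p μ) l
      (𝓝 0) := by
  refine ENNReal.tendsto_nhds_zero.2 fun ε hε ↦ ?_
  obtain ⟨δ, hδ, hball⟩ := Metric.eventually_nhds_iff_ball.1
    (ENNReal.tendsto_nhds_zero.1 (tendsto_eLpNorm_comp_sub_sub hp hp' hf) ε hε)
  filter_upwards [hφ.eventually_lt_const hδ] with i hi
  exact eLpNorm_convolution_normed_sub_le hp hp' (φ i) (hf.locallyIntegrable hp)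
    fun t ht ↦ hball t (ball_subset_ball hi.le ht)

theorem tendsto_eLpNorm_restrict_convolution_normed_sub [CompleteSpace F] {ι : Type*}
    {l : Filter ι} {φ : ι → ContDiffBump (0 : E)} (hφ : Tendsto (fun i ↦ (φ i).rOut) l (𝓝 0))
    (hp : 1 ≤ p) (hp' : p ≠ ⊤) (hf : ∀ K, IsCompact K → MemLp f p (μ.restrict K)) {K : Set E}
    (hK : IsCompact K) :
    Tendsto (fun i ↦ eLpNorm (fun x ↦ ((φ i).normed μ ⋆[lsmul ℝ ℝ, μ] f) x - f x) p
      (μ.restrict K)) l (𝓝 0) := by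
  have hloc : MemLp ((cthickening 1 K).indicator f) p μ :=
    (memLp_indicator_iff_restrict hK.cthickening.measurableSet).2 (hf _ hK.cthickening)
  refine tendsto_of_tendsto_of_tendsto_of_le_of_le' tendsto_const_nhds
    (tendsto_eLpNorm_convolution_normed_sub hφ hp hp' hloc) (.of_forall fun _ ↦ zero_le) ?_
  filter_upwards [hφ.eventually_lt_const one_pos] with i hi
  refine le_trans (eLpNorm_congr_ae ?_).le (eLpNorm_mono_measure _ Measure.restrict_le_self)
  filter_upwards [ae_restrict_mem hK.measurableSet] with x hx
  have hnear : ∀ y ∈ ball x 1, (cthickening 1 K).indicator f y = f y := fun y hy ↦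
    indicator_of_mem (mem_cthickening_of_dist_le y x 1 K hx (mem_ball.1 hy).le) f
  rw [hnear x (mem_ball_self one_pos)]
  congr 1
  refine integral_congr_ae (.of_forall fun t ↦ ?_)
  by_cases ht : t ∈ ball (0 : E) (φ i).rOut
  · simp_rw [hnear (x - t) (by
      simpa [dist_eq_norm] using (mem_ball_zero_iff.1 ht).trans hi)]
  · have : (φ i).normed μ t = 0 := by
      rwa [← notMem_support, (φ i).support_normed_eq]
    simp [this]

theorem tendstoLocallyUniformly_convolution_normed [CompleteSpace F] {ι : Type*} {l : Filter ι}
    {φ : ι → ContDiffBump (0 : E)} (hφ : Tendsto (fun i ↦ (φ i).rOut) l (𝓝 0))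
    (hf : Continuous f) :
    TendstoLocallyUniformly (fun i ↦ (φ i).normed μ ⋆[lsmul ℝ ℝ, μ] f) f l := by
  refine tendstoLocallyUniformly_iff_forall_tendsto.2 fun x ↦ ?_
  have hconv := ContDiffBump.convolution_tendsto_right (μ := μ) (l := l ×ˢ 𝓝 x)
    (φ := fun q : ι × E ↦ φ q.1) (g := fun _ ↦ f) (hφ.comp tendsto_fst)
    (.of_forall fun _ ↦ hf.aestronglyMeasurable) ((hf.tendsto x).comp tendsto_snd) tendsto_snd
  exact (((hf.tendsto x).comp tendsto_snd).prodMk_nhds hconv).mono_right (nhds_le_uniformity _)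

end Mollification

section BilinearLimits

variable {α ι X Y Z : Type*} [MeasurableSpace α] {ν : Measure α} {l : Filter ι}
  [NormedAddCommGroup X] [NormedAddCommGroup Y] [NormedAddCommGroup Z]

theorem tendsto_eLpNorm_top_restrict_of_tendstoUniformlyOn {f : ι → α → X} {f₀ : α → X} {s : Set α}
    (h : TendstoUniformlyOn f f₀ l s) (hs : MeasurableSet s) :
    Tendsto (fun i ↦ eLpNorm (f i - f₀) ⊤ (ν.restrict s)) l (𝓝 0) := by
  refine ENNReal.tendsto_nhds_zero.2 fun ε hε ↦ ?_
  filter_upwards [EMetric.tendstoUniformlyOn_iff.1 h ε hε] with i hi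
  rw [eLpNorm_exponent_top]
  refine eLpNormEssSup_le_of_ae_enorm_bound ?_
  filter_upwards [ae_restrict_mem hs] with x hx
  rw [Pi.sub_apply, ← edist_eq_enorm_sub, edist_comm]
  exact (hi x hx).le

theorem memLp_top_restrict_of_continuous [TopologicalSpace α] [T2Space α] [OpensMeasurableSpace α]
    [SecondCountableTopology α] {f : α → X} (hf : Continuous f) {K : Set α} (hK : IsCompact K) :
    MemLp f ⊤ (ν.restrict K) := by
  obtain ⟨C, hC⟩ := hK.exists_bound_of_continuousOn hf.continuousOn
  exact memLp_top_of_bound hf.aestronglyMeasurable C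
    ((ae_restrict_mem hK.measurableSet).mono fun x hx ↦ hC x hx)

theorem tendsto_eLpNorm_sub_self (f : α → X) (p : ℝ≥0∞) :
    Tendsto (fun _ : ι ↦ eLpNorm (f - f) p ν) l (𝓝 0) := by
  simpa using tendsto_const_nhds

variable [NormedSpace ℝ X] [NormedSpace ℝ Y] [NormedSpace ℝ Z] {p q r : ℝ≥0∞}
  [ENNReal.HolderTriple p q r]

theorem tendsto_eLpNorm_bilin_sub (hr : 1 ≤ r) (B : X →L[ℝ] Y →L[ℝ] Z) {f : ι → α → X}
    {f₀ : α → X} {g : ι → α → Y} {g₀ : α → Y} (hf : ∀ i, AEStronglyMeasurable (f i) ν)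
    (hf₀ : MemLp f₀ p ν) (hg : ∀ i, AEStronglyMeasurable (g i) ν) (hg₀ : MemLp g₀ q ν)
    (hff₀ : Tendsto (fun i ↦ eLpNorm (f i - f₀) p ν) l (𝓝 0))
    (hgg₀ : Tendsto (fun i ↦ eLpNorm (g i - g₀) q ν) l (𝓝 0)) :
    Tendsto (fun i ↦ eLpNorm (fun x ↦ B (f i x) (g i x) - B (f₀ x) (g₀ x)) r ν) l (𝓝 0) := by
  have holder {a : α → X} {b : α → Y} (ha : AEStronglyMeasurable a ν)
      (hb : AEStronglyMeasurable b ν) :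
      eLpNorm (fun x ↦ B (a x) (b x)) r ν ≤ ‖B‖₊ * eLpNorm a p ν * eLpNorm b q ν :=
    eLpNorm_le_eLpNorm_mul_eLpNorm_of_nnnorm ha hb (B · ·) ‖B‖₊
      (.of_forall fun _ ↦ B.le_opNorm₂ _ _)
  have bound : ∀ i, eLpNorm (fun x ↦ B (f i x) (g i x) - B (f₀ x) (g₀ x)) r ν ≤
      ‖B‖₊ * eLpNorm (f i - f₀) p ν * eLpNorm (g i - g₀) q ν +
        ‖B‖₊ * eLpNorm (f i - f₀) p ν * eLpNorm g₀ q ν +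
        ‖B‖₊ * eLpNorm f₀ p ν * eLpNorm (g i - g₀) q ν := fun i ↦ by
    have hdf := (hf i).sub hf₀.1
    have hdg := (hg i).sub hg₀.1
    have expand : (fun x ↦ B (f i x) (g i x) - B (f₀ x) (g₀ x)) =
        ((fun x ↦ B ((f i - f₀) x) ((g i - g₀) x)) + fun x ↦ B ((f i - f₀) x) (g₀ x)) +
          fun x ↦ B (f₀ x) ((g i - g₀) x) := by
      ext x
      simp only [Pi.add_apply, Pi.sub_apply, map_sub, sub_apply]
      abel
    have hB₁ := B.aestronglyMeasurable_comp₂ hdf hdg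
    have hB₂ := B.aestronglyMeasurable_comp₂ hdf hg₀.1
    rw [expand]
    refine (eLpNorm_add_le (hB₁.add hB₂) (B.aestronglyMeasurable_comp₂ hf₀.1 hdg) hr).trans ?_
    gcongr
    · exact (eLpNorm_add_le hB₁ hB₂ hr).trans (add_le_add (holder hdf hdg) (holder hdf hg₀.1))
    · exact holder hf₀.1 hdg
  have hf₀' := hf₀.2.ne
  have hg₀' := hg₀.2.ne
  refine tendsto_of_tendsto_of_tendsto_of_le_of_le tendsto_const_nhds ?_ (fun _ ↦ zero_le) bound
  have hBf := ENNReal.Tendsto.const_mul hff₀ (.inr (ENNReal.coe_ne_top (r := ‖B‖₊)))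
  rw [mul_zero] at hBf
  simpa using ((ENNReal.Tendsto.mul hBf (by simp) hgg₀ (by simp)).add
    (ENNReal.Tendsto.mul_const hBf (.inr hg₀'))).add (ENNReal.Tendsto.const_mul hgg₀
      (.inr (ENNReal.mul_ne_top (ENNReal.coe_ne_top (r := ‖B‖₊)) hf₀')))

theorem tendsto_eLpNorm_smul_add_smul_sub [TopologicalSpace α] [T2Space α] [OpensMeasurableSpace α]
    [SecondCountableTopology α] {μ : Measure α} [IsFiniteMeasureOnCompacts μ] {K : Set α}
    (hK : IsCompact K) (hp : 1 ≤ p) {χ u : α → ℝ} {w : ι → α → ℝ} {χ' u' : α → Y} {w' : ι → α → Y}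
    (hχ : Continuous χ) (hu : Continuous u) (hw : ∀ i, Continuous (w i))
    (hχ' : Continuous χ') (hu' : MemLp u' p (μ.restrict K)) (hw' : ∀ i, Continuous (w' i))
    (hwu : TendstoUniformlyOn w u l K)
    (hwu' : Tendsto (fun i ↦ eLpNorm (w' i - u') p (μ.restrict K)) l (𝓝 0)) :
    Tendsto (fun i ↦ eLpNorm (fun x ↦ (χ x • w' i x + w i x • χ' x) - (χ x • u' x + u x • χ' x)) p
      (μ.restrict K)) l (𝓝 0) := by
  have : IsFiniteMeasure (μ.restrict K) := ⟨by simpa using hK.measure_lt_top⟩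
  have hlim₁ := tendsto_eLpNorm_bilin_sub hp (lsmul ℝ ℝ) (f := fun _ : ι ↦ χ)
    (fun _ ↦ hχ.aestronglyMeasurable) (memLp_top_restrict_of_continuous hχ hK)
    (fun i ↦ (hw' i).aestronglyMeasurable) hu' (tendsto_eLpNorm_sub_self _ _) hwu'
  have hlim₂ := tendsto_eLpNorm_bilin_sub (ν := μ.restrict K) hp (lsmul ℝ ℝ) (g := fun _ : ι ↦ χ')
    (fun i ↦ (hw i).aestronglyMeasurable) (memLp_top_restrict_of_continuous hu hK)
    (fun _ ↦ hχ'.aestronglyMeasurable)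
    ((memLp_top_restrict_of_continuous hχ' hK).mono_exponent le_top)
    (tendsto_eLpNorm_top_restrict_of_tendstoUniformlyOn hwu hK.measurableSet)
    (tendsto_eLpNorm_sub_self _ p)
  refine tendsto_of_tendsto_of_tendsto_of_le_of_le tendsto_const_nhds
    (by simpa using hlim₁.add hlim₂) (fun _ ↦ zero_le) fun i ↦ ?_
  refine le_trans (eLpNorm_congr_ae (.of_forall fun x ↦ ?_)).le (eLpNorm_add_le ?_ ?_ hp)
  · simp only [Pi.add_apply, add_sub_add_comm]
  · exact (hχ.smul (hw' i)).aestronglyMeasurable.sub (hχ.aestronglyMeasurable.smul hu'.1)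
  · exact ((hw i).smul hχ').aestronglyMeasurable.sub (hu.smul hχ').aestronglyMeasurable

end BilinearLimits

section WeakDerivative

variable {E F : Type*} [NormedAddCommGroup E] [NormedSpace ℝ E] [NormedAddCommGroup F]
  [NormedSpace ℝ F]

theorem fderiv_fderiv_apply_comm {φ : E → ℝ} (hφ : ContDiff ℝ ∞ φ) (x v w : E) :
    fderiv ℝ (fun y ↦ fderiv ℝ φ y v) x w = fderiv ℝ (fun y ↦ fderiv ℝ φ y w) x v := by
  have hd : DifferentiableAt ℝ (fderiv ℝ φ) x :=
    (hφ.fderiv_right (m := 1) (WithTop.coe_le_coe.2 le_top)).differentiable one_ne_zero x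
  have hsymm : IsSymmSndFDerivAt ℝ φ x := hφ.contDiffAt.isSymmSndFDerivAt <| by
    rw [minSmoothness_of_isRCLikeNormedField]
    exact WithTop.coe_le_coe.2 le_top
  simp_rw [fderiv_clm_apply hd (differentiableAt_const _)]
  simpa using hsymm w v

variable [MeasurableSpace E]

/-- `D` is the derivative of `f` in the sense of distributions; it plays the role of the pair of
generalized partial derivatives, all directional derivatives being packed into one linear map. -/
structure HasWeakFDeriv (f : E → F) (D : E → E →L[ℝ] F) (μ : Measure E) : Prop where
  locallyIntegrable : LocallyIntegrable f μ
  locallyIntegrable_deriv : LocallyIntegrable D μ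
  integral_fderiv_smul : ∀ φ : E → ℝ, ContDiff ℝ ∞ φ → HasCompactSupport φ → ∀ v,
    ∫ x, fderiv ℝ φ x v • f x ∂μ = -∫ x, φ x • D x v ∂μ

namespace HasWeakFDeriv

variable {μ : Measure E} {f : E → F} {D : E → E →L[ℝ] F}

theorem integral_fderiv_smul_comm (h : HasWeakFDeriv f D μ) {φ : E → ℝ} (hφ : ContDiff ℝ ∞ φ)
    (hc : HasCompactSupport φ) (v w : E) :
    ∫ x, fderiv ℝ φ x v • D x w ∂μ = ∫ x, fderiv ℝ φ x w • D x v ∂μ := by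
  have hd (u : E) : ContDiff ℝ ∞ fun x ↦ fderiv ℝ φ x u :=
    (hφ.fderiv_right (m := ∞) (by simp)).clm_apply contDiff_const
  rw [← neg_inj, ← h.integral_fderiv_smul _ (hd v) (hc.fderiv_apply ℝ v),
    ← h.integral_fderiv_smul _ (hd w) (hc.fderiv_apply ℝ w)]
  simp_rw [fderiv_fderiv_apply_comm hφ _ v w]

variable [BorelSpace E] [FiniteDimensional ℝ E] [μ.IsAddHaarMeasure]

theorem fderiv_convolution (h : HasWeakFDeriv f D μ) {ψ : E → ℝ} (hψ : ContDiff ℝ ∞ ψ)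
    (hc : HasCompactSupport ψ) (x : E) :
    fderiv ℝ (ψ ⋆[lsmul ℝ ℝ, μ] f) x = (ψ ⋆[lsmul ℝ ℝ, μ] D) x := by
  have hψ₁ : ContDiff ℝ 1 ψ := hψ.of_le (mod_cast le_top)
  have hinteg := (hc.fderiv ℝ).convolutionExists_left (μ := μ) ((lsmul ℝ ℝ).precompL E)
    (hψ₁.continuous_fderiv one_ne_zero) h.locallyIntegrable x
  have hintegD := hc.convolutionExists_left (lsmul ℝ ℝ) hψ.continuous h.locallyIntegrable_deriv x
  ext v
  have test := h.integral_fderiv_smul (fun t ↦ ψ (x - t)) (hψ.comp (contDiff_const.sub contDiff_id))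
    (hc.comp_homeomorph (Homeomorph.subLeft x)) v
  have hderiv (t : E) : fderiv ℝ (fun t ↦ ψ (x - t)) t v = -fderiv ℝ ψ (x - t) v := by
    have hsub : HasFDerivAt (fun t ↦ x - t) (-ContinuousLinearMap.id ℝ E) t :=
      (hasFDerivAt_id t).const_sub x
    have hcomp := ((hψ₁.differentiable one_ne_zero (x - t)).hasFDerivAt.comp t hsub).fderiv
    exact (DFunLike.congr_fun hcomp v).trans (by simp)
  simp_rw [hderiv, neg_smul, integral_neg, neg_inj] at test
  rw [(hc.hasFDerivAt_convolution_left (lsmul ℝ ℝ) hψ₁ h.locallyIntegrable x).fderiv,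
    convolution_def, integral_apply hinteg, convolution_def, integral_apply hintegD,
    ← integral_sub_left_eq_self _ μ x,
    ← integral_sub_left_eq_self (fun t ↦ (lsmul ℝ ℝ (ψ t) (D (x - t))) v) μ x]
  simpa using test

end HasWeakFDeriv

end WeakDerivative

section StrongDerivative

variable {E F G : Type*} [NormedAddCommGroup E] [NormedSpace ℝ E] [MeasurableSpace E]
  [NormedAddCommGroup F] [NormedSpace ℝ F] [NormedAddCommGroup G] [NormedSpace ℝ G]

/-- `D` is a strong `L²_loc` derivative of `f`: smooth functions approximate `f` locally uniformly
while their derivatives approximate `D` in `L²` on compact sets. Inequalities between integrals of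
derivatives proved for smooth functions pass to `f` through such an approximation. -/
structure HasStrongFDeriv (f : E → F) (D : E → E →L[ℝ] F) (μ : Measure E) : Prop where
  memLp : ∀ K, IsCompact K → MemLp D 2 (μ.restrict K)
  exists_approx : ∃ u : ℕ → E → F, (∀ n, ContDiff ℝ ∞ (u n)) ∧ TendstoLocallyUniformly u f atTop ∧
    ∀ K, IsCompact K → Tendsto (fun n ↦ eLpNorm (fderiv ℝ (u n) - D) 2 (μ.restrict K)) atTop (𝓝 0)

theorem tendstoLocallyUniformly_comp_continuous {X Y Z ι : Type*} [TopologicalSpace X]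
    [UniformSpace Y] [UniformSpace Z] [LocallyCompactSpace X] {u : ι → X → Y} {f : X → Y}
    {l : Filter ι} [l.NeBot]
    (hu : ∀ i, Continuous (u i)) (huf : TendstoLocallyUniformly u f l) {g : Y → Z}
    (hg : Continuous g) : TendstoLocallyUniformly (fun i ↦ g ∘ u i) (g ∘ f) l := by
  have hf : Continuous f := huf.continuous (.of_forall hu)
  have hlim : Tendsto (fun i ↦ (⟨u i, hu i⟩ : C(X, Y))) l (𝓝 ⟨f, hf⟩) :=
    ContinuousMap.tendsto_iff_tendstoLocallyUniformly.2 huf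
  exact ContinuousMap.tendsto_iff_tendstoLocallyUniformly.1
    (((ContinuousMap.continuous_postcomp ⟨g, hg⟩).tendsto _).comp hlim)

variable {μ : Measure E} {f : E → F} {D : E → E →L[ℝ] F}

theorem integrable_apply_smul_apply {A : E → E →L[ℝ] ℝ} (hA : MemLp A 2 μ) (hD : MemLp D 2 μ)
    (a b : E) : Integrable (fun x ↦ A x a • D x b) μ :=
  memLp_one_iff_integrable.1 <|
    ((lsmul ℝ ℝ).bilinearComp (apply ℝ ℝ a) (apply ℝ F b)).memLp_of_bilin 1 hA hD

variable [BorelSpace E] [FiniteDimensional ℝ E]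

theorem HasWeakFDeriv.hasStrongFDeriv [CompleteSpace F] [μ.IsAddHaarMeasure]
    (h : HasWeakFDeriv f D μ) (hf : Continuous f)
    (hD : ∀ K, IsCompact K → MemLp D 2 (μ.restrict K)) : HasStrongFDeriv f D μ := by
  refine ⟨hD, ?_⟩
  let φ (n : ℕ) : ContDiffBump (0 : E) :=
    ⟨1 / (n + 2 : ℝ), 1 / (n + 1 : ℝ), by positivity, by gcongr; norm_num⟩
  have hφ : Tendsto (fun n ↦ (φ n).rOut) atTop (𝓝 0) := tendsto_one_div_add_atTop_nhds_zero_nat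
  refine ⟨fun n ↦ (φ n).normed μ ⋆[lsmul ℝ ℝ, μ] f, fun n ↦ ?_,
    tendstoLocallyUniformly_convolution_normed hφ hf, fun K hK ↦ ?_⟩
  · exact (φ n).hasCompactSupport_normed.contDiff_convolution_left _ (φ n).contDiff_normed
      h.locallyIntegrable
  · refine (tendsto_eLpNorm_restrict_convolution_normed_sub hφ one_le_two ENNReal.ofNat_ne_top hD
      hK).congr fun n ↦ ?_
    rw [← funext (h.fderiv_convolution (φ n).contDiff_normed (φ n).hasCompactSupport_normed)]
    rfl

namespace HasStrongFDeriv

theorem comp_contDiff (h : HasStrongFDeriv f D μ) {T : F → G} (hT : ContDiff ℝ ∞ T) :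
    HasStrongFDeriv (T ∘ f) (fun x ↦ (fderiv ℝ T (f x)).comp (D x)) μ := by
  obtain ⟨u, hu, huf, huD⟩ := h.exists_approx
  have hT' := hT.continuous_fderiv (by simp)
  have hf : Continuous f := huf.continuous (.of_forall fun n ↦ (hu n).continuous)
  have hTf : Continuous fun x ↦ fderiv ℝ T (f x) := hT'.comp hf
  refine ⟨fun K hK ↦ (compL ℝ E F G).memLp_of_bilin 2 (memLp_top_restrict_of_continuous hTf hK)
    (h.memLp K hK), fun n ↦ T ∘ u n, fun n ↦ hT.comp (hu n),
    tendstoLocallyUniformly_comp_continuous (fun n ↦ (hu n).continuous) huf hT.continuous,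
    fun K hK ↦ ?_⟩
  have hunif := (tendstoLocallyUniformlyOn_iff_tendstoUniformlyOn_of_compact hK).1
    (tendstoLocallyUniformly_comp_continuous (fun n ↦ (hu n).continuous) huf
      hT').tendstoLocallyUniformlyOn
  refine (tendsto_eLpNorm_bilin_sub one_le_two (compL ℝ E F G)
    (fun n ↦ (hT'.comp (hu n).continuous).aestronglyMeasurable)
    (memLp_top_restrict_of_continuous hTf hK)
    (fun n ↦ ((hu n).continuous_fderiv (by simp)).aestronglyMeasurable) (h.memLp K hK)
    (tendsto_eLpNorm_top_restrict_of_tendstoUniformlyOn hunif hK.measurableSet)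
    (huD K hK)).congr fun n ↦ ?_
  congr 1
  ext1 x
  rw [Pi.sub_apply,
    fderiv_comp x (hT.differentiable (by simp) _) ((hu n).differentiable (by simp) _)]
  rfl

theorem exists_hasCompactSupport_approx [IsFiniteMeasureOnCompacts μ] {u : E → ℝ}
    {Du : E → E →L[ℝ] ℝ} (h : HasStrongFDeriv u Du μ) {K : Set E} (hK : IsCompact K)
    (hu₀ : ∀ x ∉ K, u x = 0) (hDu₀ : ∀ x ∉ K, Du x = 0) :
    ∃ K', IsCompact K' ∧ K ⊆ K' ∧ ∃ φ : ℕ → E → ℝ, (∀ n, ContDiff ℝ ∞ (φ n)) ∧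
      (∀ n, tsupport (φ n) ⊆ K') ∧
      Tendsto (fun n ↦ eLpNorm (fderiv ℝ (φ n) - Du) 2 (μ.restrict K')) atTop (𝓝 0) := by
  obtain ⟨w, hw, hwu, hwD⟩ := h.exists_approx
  obtain ⟨R, hR, hKR⟩ := hK.isBounded.subset_ball_lt 0 0
  let χ : ContDiffBump (0 : E) := ⟨R, R + 1, hR, lt_add_one R⟩
  have hK' : IsCompact (closedBall (0 : E) (R + 1)) := isCompact_closedBall 0 (R + 1)
  have leibniz (x : E) : χ x • Du x + u x • fderiv ℝ χ x = Du x := by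
    by_cases hx : x ∈ K
    · have hχ : χ =ᶠ[𝓝 x] fun _ ↦ 1 := by
        filter_upwards [isOpen_ball.mem_nhds (hKR hx)] with y hy
          using χ.one_of_mem_closedBall (ball_subset_closedBall hy)
      simp [hχ.fderiv_eq, hχ.eq_of_nhds]
    · simp [hu₀ x hx, hDu₀ x hx]
  refine ⟨closedBall 0 (R + 1), hK', hKR.trans (ball_subset_closedBall.trans
    (closedBall_subset_closedBall (le_add_of_nonneg_right zero_le_one))), fun n ↦ χ * w n,
    fun n ↦ χ.contDiff.mul (hw n), fun n ↦ tsupport_mul_subset_left.trans χ.tsupport_eq.subset, ?_⟩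
  have hlim := tendsto_eLpNorm_smul_add_smul_sub hK' one_le_two χ.continuous
    (hwu.continuous (.of_forall fun n ↦ (hw n).continuous)) (fun n ↦ (hw n).continuous)
    (χ.contDiff.continuous_fderiv one_ne_zero) (h.memLp _ hK')
    (fun n ↦ (hw n).continuous_fderiv (by simp))
    ((tendstoLocallyUniformlyOn_iff_tendstoUniformlyOn_of_compact hK').1
      hwu.tendstoLocallyUniformlyOn) (hwD _ hK')
  refine hlim.congr fun n ↦ ?_
  congr 1
  ext1 x
  rw [leibniz, Pi.sub_apply,
    fderiv_mul (χ.contDiff.differentiable one_ne_zero x) ((hw n).differentiable (by simp) x)]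

theorem integral_smul_comm [IsFiniteMeasureOnCompacts μ] {u : E → ℝ}
    {Du : E → E →L[ℝ] ℝ} (hu : HasStrongFDeriv u Du μ) {K : Set E} (hK : IsCompact K)
    (hu₀ : ∀ x ∉ K, u x = 0) (hDu₀ : ∀ x ∉ K, Du x = 0) (hf : HasWeakFDeriv f D μ)
    (hD : ∀ K, IsCompact K → MemLp D 2 (μ.restrict K)) (a b : E) :
    ∫ x, Du x a • D x b ∂μ = ∫ x, Du x b • D x a ∂μ := by
  obtain ⟨K', hK', hKK', φ, hφ, hsupp, hφD⟩ := hu.exists_hasCompactSupport_approx hK hu₀ hDu₀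
  have : IsFiniteMeasure (μ.restrict K') := ⟨by simpa using hK'.measure_lt_top⟩
  have hlim (a b : E) : Tendsto (fun n ↦ ∫ x, fderiv ℝ (φ n) x a • D x b ∂μ) atTop
      (𝓝 (∫ x, Du x a • D x b ∂μ)) := by
    have restrict {A : E → E →L[ℝ] ℝ} (hA : ∀ x ∉ K', A x = 0) :
        ∫ x, A x a • D x b ∂μ = ∫ x in K', A x a • D x b ∂μ :=
      (setIntegral_eq_integral_of_forall_compl_eq_zero fun x hx ↦ by simp [hA x hx]).symm
    rw [restrict fun x hx ↦ hDu₀ x fun h ↦ hx (hKK' h)]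
    simp_rw [fun n ↦ restrict (A := fderiv ℝ (φ n)) fun _ hx ↦ image_eq_zero_of_notMem_tsupport
      fun h ↦ hx (hsupp n (tsupport_fderiv_subset ℝ h))]
    have hinteg {A : E → E →L[ℝ] ℝ} (hA : MemLp A 2 (μ.restrict K')) :=
      integrable_apply_smul_apply hA (hD K' hK') a b
    have hφ' (n : ℕ) : Continuous (fderiv ℝ (φ n)) := (hφ n).continuous_fderiv (by simp)
    exact tendsto_integral_of_L1' _ (hinteg (hu.memLp K' hK')).1
      (.of_forall fun n ↦ hinteg
        ((memLp_top_restrict_of_continuous (hφ' n) hK').mono_exponent le_top))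
      (tendsto_eLpNorm_bilin_sub (p := 2) (q := 2) le_rfl
        ((lsmul ℝ ℝ).bilinearComp (apply ℝ ℝ a) (apply ℝ F b))
        (fun n ↦ (hφ' n).aestronglyMeasurable) (hu.memLp K' hK')
        (fun _ ↦ (hD K' hK').1) (hD K' hK') hφD (tendsto_eLpNorm_sub_self _ _))
  refine tendsto_nhds_unique (hlim a b) ((hlim b a).congr fun n ↦ ?_)
  exact hf.integral_fderiv_smul_comm (hφ n) (hK'.of_isClosed_subset (isClosed_tsupport _)
    (hsupp n)) b a

end HasStrongFDeriv

end StrongDerivative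

section TestFunctions

variable {E : Type*} [NormedAddCommGroup E] [NormedSpace ℝ E] [MeasurableSpace E]
  [BorelSpace E]

theorem hasDerivAt_integral_add_smul {ν : Measure E} [IsFiniteMeasureOnCompacts ν] {η : E → ℝ}
    (hη : ContDiff ℝ ∞ η) (hc : HasCompactSupport η) (a : E) (t : ℝ) :
    HasDerivAt (fun s : ℝ ↦ ∫ x, η (s • a + x) ∂ν) (∫ x, fderiv ℝ η (t • a + x) a ∂ν) t := by
  have hη' : Continuous (fderiv ℝ η) := hη.continuous_fderiv (by simp)
  obtain ⟨M, hM⟩ := (hc.fderiv ℝ).exists_bound_of_continuous hη'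
  let K : Set E := (fun q : ℝ × E ↦ q.2 - q.1 • a) '' (closedBall t 1 ×ˢ tsupport (fderiv ℝ η))
  have hK : IsCompact K := ((isCompact_closedBall t 1).prod (hc.fderiv ℝ)).image
    (continuous_snd.sub (continuous_fst.smul continuous_const))
  have translate_continuous (s : ℝ) : Continuous fun x ↦ η (s • a + x) :=
    hη.continuous.comp (by fun_prop)
  refine (hasDerivAt_integral_of_dominated_loc_of_deriv_le
    (F' := fun s x ↦ fderiv ℝ η (s • a + x) a) (bound := K.indicator fun _ ↦ M * ‖a‖)
    (ball_mem_nhds t one_pos)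
    (.of_forall fun s ↦ (translate_continuous s).aestronglyMeasurable)
    ((translate_continuous t).integrable_of_hasCompactSupport
      (hc.comp_homeomorph (Homeomorph.addLeft (t • a))))
    ((hη'.comp (continuous_const_add (t • a))).clm_apply continuous_const).aestronglyMeasurable
    (.of_forall fun x s hs ↦ ?_)
    ((integrable_indicator_iff hK.measurableSet).2 (integrableOn_const hK.measure_lt_top.ne))
    (.of_forall fun x s _ ↦ ?_)).2
  · by_cases hx : x ∈ K
    · rw [indicator_of_mem hx]
      exact (le_opNorm _ a).trans (by gcongr; exact hM _)
    · have hzero : fderiv ℝ η (s • a + x) = 0 := image_eq_zero_of_notMem_tsupport fun hmem ↦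
        hx ⟨(s, s • a + x), ⟨ball_subset_closedBall hs, hmem⟩, by simp⟩
      simp [hzero, indicator_of_notMem hx]
  · have hline : HasDerivAt (fun s : ℝ ↦ s • a + x) a s := by
      simpa using ((hasDerivAt_id s).smul_const a).add_const x
    exact (hη.differentiable (by simp) _).hasFDerivAt.comp_hasDerivAt s hline

variable [FiniteDimensional ℝ E]

theorem measure_ext_of_forall_contDiff_integral_eq {ν₁ ν₂ : Measure E}
    [IsFiniteMeasureOnCompacts ν₁] [IsFiniteMeasureOnCompacts ν₂]
    (h : ∀ η : E → ℝ, ContDiff ℝ ∞ η → HasCompactSupport η → ∫ x, η x ∂ν₁ = ∫ x, η x ∂ν₂) :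
    ν₁ = ν₂ := by
  set ν := ν₁ + ν₂
  have hν₁ : ν₁ ≪ ν := Measure.absolutelyContinuous_of_le (Measure.le_add_right le_rfl)
  have hν₂ : ν₂ ≪ ν := Measure.absolutelyContinuous_of_le (Measure.le_add_left le_rfl)
  have density_locallyIntegrable (ν' : Measure E) [IsFiniteMeasureOnCompacts ν'] :
      LocallyIntegrable (fun x ↦ (ν'.rnDeriv ν x).toReal) ν :=
    locallyIntegrable_iff.2 fun K hK ↦ integrable_toReal_of_lintegral_ne_top
      (Measure.measurable_rnDeriv _ _).aemeasurable
      ((Measure.setLIntegral_rnDeriv_le K).trans_lt hK.measure_lt_top).ne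
  have density_eq := ae_eq_of_integral_contDiff_smul_eq (density_locallyIntegrable ν₁)
    (density_locallyIntegrable ν₂) fun η hη hc ↦ by
      simp_rw [smul_eq_mul, mul_comm (η _), ← smul_eq_mul]
      rw [integral_rnDeriv_smul hν₁, integral_rnDeriv_smul hν₂, h η hη hc]
  rw [← Measure.withDensity_rnDeriv_eq _ _ hν₁, ← Measure.withDensity_rnDeriv_eq _ _ hν₂]
  refine withDensity_congr_ae ?_
  filter_upwards [density_eq, Measure.rnDeriv_lt_top ν₁ ν, Measure.rnDeriv_lt_top ν₂ ν]
    with x hx h₁ h₂ using (ENNReal.toReal_eq_toReal_iff' h₁.ne h₂.ne).1 hx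

theorem isAddLeftInvariant_of_integral_fderiv_eq_zero {ν : Measure E} [IsFiniteMeasureOnCompacts ν]
    (h : ∀ η : E → ℝ, ContDiff ℝ ∞ η → HasCompactSupport η → ∀ v, ∫ x, fderiv ℝ η x v ∂ν = 0) :
    ν.IsAddLeftInvariant := by
  refine ⟨fun a ↦ ?_⟩
  have : IsFiniteMeasureOnCompacts (ν.map (a + ·)) :=
    Measure.IsFiniteMeasureOnCompacts.map ν (Homeomorph.addLeft a)
  refine measure_ext_of_forall_contDiff_integral_eq fun η hη hc ↦ ?_
  have hderiv (t : ℝ) : HasDerivAt (fun s : ℝ ↦ ∫ x, η (s • a + x) ∂ν) 0 t := by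
    have := h (fun x ↦ η (t • a + x)) (hη.comp (contDiff_const.add contDiff_id))
      (hc.comp_homeomorph (Homeomorph.addLeft (t • a))) a
    simp_rw [fderiv_comp_add_left] at this
    exact this ▸ hasDerivAt_integral_add_smul hη hc a t
  have hconst := is_const_of_deriv_eq_zero (fun t ↦ (hderiv t).differentiableAt)
    (fun t ↦ (hderiv t).deriv) 1 0
  rw [integral_map (by fun_prop) hη.continuous.aestronglyMeasurable]
  simpa using hconst

end TestFunctions

section PlaneLinearAlgebra

theorem apply_eq_re_smul_add_im_smul {F : Type*} [NormedAddCommGroup F] [NormedSpace ℝ F]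
    (L : ℂ →L[ℝ] F) (w : ℂ) : L w = w.re • L 1 + w.im • L I := by
  rw [← map_smul, ← map_smul, ← map_add, real_smul, real_smul, mul_one, re_add_im]

theorem det_eq_re_mul_im_sub (L : ℂ →L[ℝ] ℂ) :
    L.det = (L 1).re * (L I).im - (L 1).im * (L I).re := by
  rw [ContinuousLinearMap.det, ← LinearMap.det_toMatrix basisOneI, Matrix.det_fin_two]
  simp [LinearMap.toMatrix_apply, mul_comm]

theorem apply_smul_apply_sub_apply_smul_apply (A : ℂ →L[ℝ] ℝ) (L : ℂ →L[ℝ] ℂ) :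
    A (L 1) • L I - A (L I) • L 1 = L.det • (A 1 • I - (A I : ℂ)) := by
  rw [apply_eq_re_smul_add_im_smul A (L 1), apply_eq_re_smul_add_im_smul A (L I),
    det_eq_re_mul_im_sub]
  apply Complex.ext <;> simp <;> ring

theorem apply_eq_mul_add_mul_conj (L : ℂ →L[ℝ] ℂ) (w : ℂ) :
    L w = (L 1 - I * L I) / 2 * w + (L 1 + I * L I) / 2 * conj w := by
  rw [apply_eq_re_smul_add_im_smul L w]
  apply Complex.ext <;> simp <;> ring

theorem opNorm_le_norm_add_norm (L : ℂ →L[ℝ] ℂ) :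
    ‖L‖ ≤ ‖(L 1 - I * L I) / 2‖ + ‖(L 1 + I * L I) / 2‖ :=
  L.opNorm_le_bound (by positivity) fun w ↦ by
    rw [apply_eq_mul_add_mul_conj L w, add_mul]
    exact (norm_add_le _ _).trans_eq (by simp only [norm_mul, RCLike.norm_conj])

theorem det_eq_norm_sq_sub_norm_sq (L : ℂ →L[ℝ] ℂ) :
    L.det = ‖(L 1 - I * L I) / 2‖ ^ 2 - ‖(L 1 + I * L I) / 2‖ ^ 2 := by
  rw [det_eq_re_mul_im_sub, ← normSq_eq_norm_sq, ← normSq_eq_norm_sq, normSq_div, normSq_div]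
  simp only [normSq_apply, sub_re, sub_im, add_re, add_im, mul_re, mul_im, I_re, I_im, re_ofNat,
    im_ofNat]
  ring

theorem norm_sq_le_mul_det_of_beltrami {L : ℂ →L[ℝ] ℂ} {m : ℂ} {k : ℝ} (hk : k < 1) (hm : ‖m‖ ≤ k)
    (h : (L 1 + I * L I) / 2 = m * ((L 1 - I * L I) / 2)) :
    ‖L‖ ^ 2 ≤ (1 + k) / (1 - k) * L.det := by
  have hL := opNorm_le_norm_add_norm L
  rw [det_eq_norm_sq_sub_norm_sq]
  set p := ‖(L 1 - I * L I) / 2‖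
  set q := ‖(L 1 + I * L I) / 2‖
  have : 0 ≤ p := norm_nonneg _
  have : 0 ≤ q := norm_nonneg _
  have hqp : q ≤ k * p := by
    rw [show q = ‖m‖ * p by rw [← norm_mul, ← h]]
    gcongr
  calc ‖L‖ ^ 2 ≤ (p + q) * (p + q) := by rw [← sq]; gcongr
    _ ≤ (p + q) * ((1 + k) / (1 - k) * (p - q)) := by
      gcongr
      rw [div_mul_eq_mul_div, le_div_iff₀ (sub_pos.2 hk)]
      linarith
    _ = (1 + k) / (1 - k) * (p ^ 2 - q ^ 2) := by ring

end PlaneLinearAlgebra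

section Jacobian

variable {D : ℂ → ℂ →L[ℝ] ℂ}

theorem locallyIntegrable_det (hD : ∀ K, IsCompact K → MemLp D 2 (volume.restrict K)) :
    LocallyIntegrable fun z ↦ (D z).det := by
  simp_rw [det_eq_re_mul_im_sub]
  refine locallyIntegrable_iff.2 fun K hK ↦ ?_
  have hcoord (ℓ : ℂ →L[ℝ] ℝ) (v : ℂ) : MemLp (fun z ↦ ℓ (D z v)) 2 (volume.restrict K) :=
    (ℓ.comp (apply ℝ ℂ v)).comp_memLp' (hD K hK)
  exact ((hcoord reCLM 1).integrable_mul (hcoord imCLM I)).sub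
    ((hcoord imCLM 1).integrable_mul (hcoord reCLM I))

/-- The form `dη(G) ∧ dG` is exact, being `d(η ∘ G) ∧ dG`. -/
theorem integral_det_mul_fderiv_eq_zero (G : ℂ ≃ₜ ℂ) (hG : HasWeakFDeriv G D volume)
    (hD : ∀ K, IsCompact K → MemLp D 2 (volume.restrict K)) {η : ℂ → ℝ} (hη : ContDiff ℝ ∞ η)
    (hc : HasCompactSupport η) (v : ℂ) : ∫ z, (D z).det * fderiv ℝ η (G z) v = 0 := by
  let K := G ⁻¹' tsupport η
  have hK : IsCompact K := G.isCompact_preimage.2 hc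
  have hηG : HasStrongFDeriv (η ∘ G) (fun z ↦ (fderiv ℝ η (G z)).comp (D z)) volume :=
    (hG.hasStrongFDeriv G.continuous hD).comp_contDiff hη
  have hderiv₀ (z : ℂ) (hz : z ∉ K) : (fderiv ℝ η (G z)).comp (D z) = 0 := by
    rw [image_eq_zero_of_notMem_tsupport fun h ↦ hz (tsupport_fderiv_subset ℝ h), zero_comp]
  have hsymm := hηG.integral_smul_comm hK
    (fun z hz ↦ image_eq_zero_of_notMem_tsupport (f := η) (x := G z) hz) hderiv₀ hG hD 1 I
  have hinteg (a b : ℂ) : Integrable fun z ↦ (fderiv ℝ η (G z)).comp (D z) a • D z b := by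
    refine (integrableOn_iff_integrable_of_support_subset fun z hz ↦ ?_).1
      (integrable_apply_smul_apply (hηG.memLp K hK) (hD K hK) a b)
    by_contra hzK
    exact hz (congrArg (· a • D z b) (hderiv₀ z hzK) |>.trans (zero_smul ℝ _))
  let ℓ : ℂ →L[ℝ] ℝ := v.re • imCLM - v.im • reCLM
  calc ∫ z, (D z).det * fderiv ℝ η (G z) v
      = ∫ z, ℓ ((fderiv ℝ η (G z)).comp (D z) 1 • D z I -
          (fderiv ℝ η (G z)).comp (D z) I • D z 1) := by
        refine integral_congr_ae (.of_forall fun z ↦ ?_)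
        simp only [ContinuousLinearMap.comp_apply, apply_smul_apply_sub_apply_smul_apply, ℓ]
        rw [apply_eq_re_smul_add_im_smul _ v]
        simp
        ring
    _ = 0 := by
        refine (ℓ.integral_comp_comm ((hinteg 1 I).sub (hinteg I 1))).trans ?_
        rw [integral_sub' (hinteg 1 I) (hinteg I 1), hsymm, sub_self, map_zero]

theorem exists_map_withDensity_det_eq_smul_volume (G : ℂ ≃ₜ ℂ) (hG : HasWeakFDeriv G D volume)
    (hD : ∀ K, IsCompact K → MemLp D 2 (volume.restrict K)) (hdet : ∀ᵐ z, 0 ≤ (D z).det) :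
    ∃ c : ℝ≥0, (volume.withDensity fun z ↦ .ofReal (D z).det).map G = c • volume := by
  have hinteg := locallyIntegrable_det hD
  have hfin : IsFiniteMeasureOnCompacts (volume.withDensity fun z ↦ .ofReal (D z).det) :=
    ⟨fun K hK ↦ by
      rw [withDensity_apply _ hK.measurableSet]
      exact (hinteg.integrableOn_isCompact hK).lintegral_lt_top⟩
  have := Measure.IsFiniteMeasureOnCompacts.map (volume.withDensity fun z ↦ .ofReal (D z).det) G
  have := isAddLeftInvariant_of_integral_fderiv_eq_zero
    (ν := (volume.withDensity fun z ↦ .ofReal (D z).det).map G) fun η hη hc v ↦ by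
      rw [G.measurableEmbedding.integral_map, integral_withDensity_eq_integral_toReal_smul₀
        hinteg.aestronglyMeasurable.aemeasurable.ennreal_ofReal (by simp),
        ← integral_det_mul_fderiv_eq_zero G hG hD hη hc v]
      refine integral_congr_ae ?_
      filter_upwards [hdet] with z hz
      rw [ENNReal.toReal_ofReal hz, smul_eq_mul]
  exact ⟨_, Measure.isAddLeftInvariant_eq_smul _ volume⟩

end Jacobian

section Quasiconformal

/-- The real-linear differential at `z` of a map of the plane whose partial derivatives
are `g₁` and `g₂`. -/
noncomputable def weakDifferential (g₁ g₂ : ℂ → ℂ) (z : ℂ) : ℂ →L[ℝ] ℂ :=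
  reCLM.smulRight (g₁ z) + imCLM.smulRight (g₂ z)

theorem weakDifferential_apply (g₁ g₂ : ℂ → ℂ) (z v : ℂ) :
    weakDifferential g₁ g₂ z v = v.re • g₁ z + v.im • g₂ z := rfl

/-- A form of `K`-quasiconformality with weak derivative `D`: the energy density `‖D‖²`, transported
by `G`, is dominated by a multiple of Lebesgue measure. The constant `C` absorbs the constant in
the change of variables formula, which need not be normalised. -/
structure IsQuasiconformalWith (G : ℂ ≃ₜ ℂ) (D : ℂ → ℂ →L[ℝ] ℂ) (C : ℝ≥0) : Prop where
  hasStrongFDeriv : HasStrongFDeriv G D volume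
  map_energy_le : (volume.withDensity fun z ↦ ‖D z‖ₑ ^ 2).map G ≤ C • volume

variable {g₁ g₂ : ℂ → ℂ}

theorem memLp_weakDifferential {p : ℝ≥0∞} {μ : Measure ℂ} (h₁ : MemLp g₁ p μ) (h₂ : MemLp g₂ p μ) :
    MemLp (weakDifferential g₁ g₂) p μ :=
  ((smulRightL ℝ ℂ ℂ reCLM).comp_memLp' h₁).add ((smulRightL ℝ ℂ ℂ imCLM).comp_memLp' h₂)

theorem locallyIntegrable_weakDifferential (h₁ : LocallyIntegrable g₁)
    (h₂ : LocallyIntegrable g₂) : LocallyIntegrable (weakDifferential g₁ g₂) :=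
  locallyIntegrable_iff.2 fun _ hK ↦ memLp_one_iff_integrable.1 (memLp_weakDifferential
    (memLp_one_iff_integrable.2 (h₁.integrableOn_isCompact hK))
    (memLp_one_iff_integrable.2 (h₂.integrableOn_isCompact hK)))

theorem HasWeakPartialsOn.hasWeakFDeriv {f : ℂ → ℂ} (h : HasWeakPartialsOn f g₁ g₂ univ) :
    HasWeakFDeriv f (weakDifferential g₁ g₂) volume := by
  obtain ⟨hf, hg₁, hg₂, hparts⟩ := h
  rw [locallyIntegrableOn_univ] at hf hg₁ hg₂
  simp only [Measure.restrict_univ, mul_comm _ (ofReal _), ← real_smul] at hparts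
  refine ⟨hf, locallyIntegrable_weakDifferential hg₁ hg₂, fun φ hφ hc v ↦ ?_⟩
  obtain ⟨h₁, h₂⟩ := hparts φ hφ hc (subset_univ _)
  have hφf (c : ℝ) (a : ℂ) : Integrable fun z ↦ c • fderiv ℝ φ z a • f z :=
    .smul c <| hf.integrable_smul_left_of_hasCompactSupport
      ((hφ.continuous_fderiv (by simp)).clm_apply continuous_const) (hc.fderiv_apply ℝ a)
  have hφg (c : ℝ) {g : ℂ → ℂ} (hg : LocallyIntegrable g) : Integrable fun z ↦ c • φ z • g z :=
    .smul c <| hg.integrable_smul_left_of_hasCompactSupport hφ.continuous hc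
  calc ∫ z, fderiv ℝ φ z v • f z
      = ∫ z, v.re • fderiv ℝ φ z 1 • f z + v.im • fderiv ℝ φ z I • f z := by
        simp_rw [apply_eq_re_smul_add_im_smul (fderiv ℝ φ _) v, add_smul, smul_assoc]
    _ = -∫ z, v.re • φ z • g₁ z + v.im • φ z • g₂ z := by
        rw [integral_add (hφf _ 1) (hφf _ I), integral_add (hφg _ hg₁) (hφg _ hg₂)]
        simp_rw [integral_smul, h₁, h₂, smul_neg, neg_add]
    _ = -∫ z, φ z • weakDifferential g₁ g₂ z v := by
        simp_rw [weakDifferential_apply, smul_add, smul_comm (φ _)]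

theorem withDensity_enorm_sq_le_smul_withDensity_det {D : ℂ → ℂ →L[ℝ] ℂ} {Q : ℝ} (hQ : 0 ≤ Q)
    (h : ∀ᵐ z, ‖D z‖ ^ 2 ≤ Q * (D z).det) :
    volume.withDensity (fun z ↦ ‖D z‖ₑ ^ 2) ≤
      Q.toNNReal • volume.withDensity fun z ↦ .ofReal (D z).det := by
  rw [ENNReal.smul_def, ← withDensity_smul' _ _ ENNReal.coe_ne_top]
  refine withDensity_mono ?_
  filter_upwards [h] with z hz
  calc ‖D z‖ₑ ^ 2 = .ofReal (‖D z‖ ^ 2) := by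
        rw [ENNReal.ofReal_pow (norm_nonneg _), ofReal_norm]
    _ ≤ .ofReal (Q * (D z).det) := ENNReal.ofReal_le_ofReal hz
    _ = .ofReal Q * .ofReal (D z).det := ENNReal.ofReal_mul hQ

theorem exists_isQuasiconformalWith_of_norm_sq_le_mul_det (G : ℂ ≃ₜ ℂ) {D : ℂ → ℂ →L[ℝ] ℂ}
    (hG : HasWeakFDeriv G D volume) (hD : ∀ K, IsCompact K → MemLp D 2 (volume.restrict K))
    {Q : ℝ} (hQ : 0 < Q) (h : ∀ᵐ z, ‖D z‖ ^ 2 ≤ Q * (D z).det) :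
    ∃ C, IsQuasiconformalWith G D C := by
  obtain ⟨c, hc⟩ := exists_map_withDensity_det_eq_smul_volume G hG hD
    (h.mono fun z hz ↦ nonneg_of_mul_nonneg_right ((sq_nonneg _).trans hz) hQ)
  refine ⟨Q.toNNReal * c, hG.hasStrongFDeriv G.continuous hD, ?_⟩
  rw [mul_smul, ← hc, ← Measure.map_smul]
  exact Measure.map_mono (withDensity_enorm_sq_le_smul_withDensity_det hQ.le h) G.measurable

theorem memLp_two_restrict {g : ℂ → ℂ} {K : Set ℂ} (hg : LocallyIntegrableOn g univ)
    (hK : IntegrableOn (fun z ↦ ‖g z‖ ^ 2) K) : MemLp g 2 (volume.restrict K) :=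
  (memLp_two_iff_integrable_sq_norm
    (locallyIntegrableOn_univ.1 hg).aestronglyMeasurable.restrict).2 hK.integrable

theorem IsQCOfPlane.exists_isQuasiconformalWith {f : ℂ → ℂ} (hf : IsQCOfPlane f) :
    ∃ G : ℂ ≃ₜ ℂ, ⇑G = f ∧ ∃ D C, IsQuasiconformalWith G D C := by
  obtain ⟨⟨G, hG⟩, g₁, g₂, hweak, hsq, μ, -, ⟨k, hk, hμ⟩, hbeltrami⟩ := hf
  have hk₀ : 0 ≤ k := hμ.exists.elim fun z hz ↦ (norm_nonneg _).trans hz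
  have hdistortion : ∀ᵐ z, ‖weakDifferential g₁ g₂ z‖ ^ 2 ≤
      (1 + k) / (1 - k) * (weakDifferential g₁ g₂ z).det := by
    filter_upwards [hμ, hbeltrami] with z hμz hz
    exact norm_sq_le_mul_det_of_beltrami hk hμz (by simpa [weakDifferential_apply] using hz)
  exact ⟨G, hG, weakDifferential g₁ g₂, exists_isQuasiconformalWith_of_norm_sq_le_mul_det G
    (hG ▸ hweak.hasWeakFDeriv) (fun K hK ↦ memLp_weakDifferential
      (memLp_two_restrict hweak.2.1 (hsq K hK).1)
      (memLp_two_restrict hweak.2.2.1 (hsq K hK).2))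
    (div_pos (by linarith) (by linarith)) hdistortion⟩

namespace IsQuasiconformalWith

variable {G : ℂ ≃ₜ ℂ} {D : ℂ → ℂ →L[ℝ] ℂ} {C : ℝ≥0}

theorem setLIntegral_comp_mul_le (h : IsQuasiconformalWith G D C) {A : Set ℂ} (hA : MeasurableSet A)
    {p : ℂ → ℝ≥0∞} (hp : Measurable p) :
    ∫⁻ z in A, p (G z) * ‖D z‖ₑ ^ 2 ≤ C * ∫⁻ w in G '' A, p w := by
  have hD : LocallyIntegrable D := locallyIntegrable_iff.2 fun K hK ↦
    have := isFiniteMeasure_restrict.2 (hK.measure_lt_top (μ := volume)).ne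
    (h.hasStrongFDeriv.memLp K hK).integrable one_le_two
  calc ∫⁻ z in A, p (G z) * ‖D z‖ₑ ^ 2
      = ∫⁻ z in A, p (G z) ∂(volume.withDensity fun z ↦ ‖D z‖ₑ ^ 2) := by
        refine .trans ?_ (setLIntegral_withDensity_eq_lintegral_mul₀
          (hD.aestronglyMeasurable.enorm.pow_const 2) (hp.comp G.measurable).aemeasurable hA).symm
        simp_rw [Pi.mul_apply, Function.comp_apply, mul_comm]
    _ = ∫⁻ w in G '' A, p w ∂((volume.withDensity fun z ↦ ‖D z‖ₑ ^ 2).map G) := by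
        rw [G.measurableEmbedding.restrict_map, G.measurableEmbedding.lintegral_map,
          G.injective.preimage_image]
    _ ≤ ∫⁻ w in G '' A, p w ∂(C • volume) :=
        lintegral_mono' (Measure.restrict_mono le_rfl h.map_energy_le) le_rfl
    _ = C * ∫⁻ w in G '' A, p w := by
        rw [Measure.restrict_smul, lintegral_smul_measure, ENNReal.smul_def, smul_eq_mul]

theorem setLIntegral_comp_deriv_le (h : IsQuasiconformalWith G D C) {A : Set ℂ}
    (hA : MeasurableSet A) {T : ℂ → ℝ} (hT : ContDiff ℝ ∞ T) :
    ∫⁻ z in A, ‖(fderiv ℝ T (G z)).comp (D z)‖ₑ ^ 2 ≤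
      C * ∫⁻ w in G '' A, ‖fderiv ℝ T w‖ₑ ^ 2 := by
  refine (lintegral_mono fun z ↦ ?_).trans (h.setLIntegral_comp_mul_le hA
    ((hT.continuous_fderiv (by simp)).enorm.measurable.pow_const 2))
  rw [← mul_pow]
  gcongr
  exact opENorm_comp_le _ _

end IsQuasiconformalWith

end Quasiconformal

section PolarCoordinates

theorem continuous_circleMap_uncurry (c : ℂ) : Continuous fun p : ℝ × ℝ ↦ circleMap c p.1 p.2 := by
  unfold circleMap
  fun_prop

theorem exists_mem_Icc_circleMap_eq {c p : ℂ} {r : ℝ} (hp : p ∈ sphere c r) :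
    ∃ θ ∈ Icc (-π) π, circleMap c r θ = p := by
  refine ⟨arg (p - c), ⟨(neg_pi_lt_arg _).le, arg_le_pi _⟩, ?_⟩
  rw [circleMap, ← mem_sphere_iff_norm.1 hp, norm_mul_exp_arg_mul_I, add_sub_cancel]

theorem hasDerivAt_circleMap_radius (c : ℂ) (r θ : ℝ) :
    HasDerivAt (fun r : ℝ ↦ circleMap c r θ) (cexp (θ * I)) r := by
  simpa [circleMap] using (ofRealCLM.hasDerivAt.mul_const (cexp (θ * I))).const_add c

theorem contDiff_circleMap_radius (c : ℂ) (θ : ℝ) {n : WithTop ℕ∞} :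
    ContDiff ℝ n fun r : ℝ ↦ circleMap c r θ :=
  contDiff_const.add (ofRealCLM.contDiff.mul contDiff_const)

theorem measurePreserving_add_exp_mul (c : ℂ) (θ : ℝ) :
    MeasurePreserving (fun z : ℂ ↦ c + cexp (θ * I) * z) := by
  have hrot : (fun z : ℂ ↦ cexp (θ * I) * z) = rotation (Circle.exp θ) := by
    ext z
    rw [rotation_apply, Circle.coe_exp]
  have : MeasurePreserving (fun z : ℂ ↦ cexp (θ * I) * z) :=
    hrot ▸ (rotation (Circle.exp θ)).measurePreserving
  exact (measurePreserving_add_left volume c).comp this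

theorem lintegral_circleMap_add (c : ℂ) (θ₀ : ℝ) {f : ℂ → ℝ≥0∞} (hf : Measurable f) :
    ∫⁻ p in Ioi (0 : ℝ) ×ˢ Ioo (-π) π, .ofReal p.1 * f (circleMap c p.1 (θ₀ + p.2)) =
      ∫⁻ z, f z := by
  rw [← (measurePreserving_add_exp_mul c θ₀).lintegral_comp hf,
    ← Complex.lintegral_comp_polarCoord_symm]
  refine setLIntegral_congr_fun (measurableSet_Ioi.prod measurableSet_Ioo) fun p _ ↦ ?_
  rw [smul_eq_mul, circleMap, ofReal_add, add_mul, Complex.exp_add, exp_mul_I (p.2 : ℂ),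
    Complex.polarCoord_symm_apply, ← ofReal_cos, ← ofReal_sin, mul_left_comm]

theorem setLIntegral_circleMap_le {f : ℂ → ℝ≥0∞} (hf : Measurable f) {c : ℂ} {a b α β : ℝ}
    (ha : 0 ≤ a) (hαβ : β - α ≤ 2 * π) {S : Set ℂ} (hS : MeasurableSet S)
    (hmem : ∀ r ∈ Ioo a b, ∀ θ ∈ Ioo α β, circleMap c r θ ∈ S) :
    ∫⁻ p in Ioo a b ×ˢ Ioo α β, .ofReal p.1 * f (circleMap c p.1 p.2) ≤ ∫⁻ z in S, f z := by
  set θ₀ := (α + β) / 2 with hθ₀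
  have hshift : MeasurePreserving (Prod.map id (θ₀ + ·) : ℝ × ℝ → ℝ × ℝ) :=
    (MeasurePreserving.id volume).prod (measurePreserving_add_left volume θ₀)
  have hmeas : Measurable fun p : ℝ × ℝ ↦ ENNReal.ofReal p.1 * f (circleMap c p.1 p.2) :=
    measurable_fst.ennreal_ofReal.mul (hf.comp (continuous_circleMap_uncurry c).measurable)
  rw [← lintegral_indicator hS, ← lintegral_circleMap_add c θ₀ (hf.indicator hS),
    ← hshift.setLIntegral_comp_preimage (measurableSet_Ioo.prod measurableSet_Ioo) hmeas]
  refine (setLIntegral_mono' (hshift.measurable (measurableSet_Ioo.prod measurableSet_Ioo))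
    fun p hp ↦ ?_).trans (lintegral_mono_set fun p hp ↦ ?_)
  · exact (congrArg (_ * ·) (indicator_of_mem (hmem _ hp.1 _ hp.2) f).symm).le
  · obtain ⟨hr, hθ⟩ : p.1 ∈ Ioo a b ∧ θ₀ + p.2 ∈ Ioo α β := hp
    exact ⟨ha.trans_lt hr.1, by linarith [hθ.1], by linarith [hθ.2]⟩

end PolarCoordinates

section LengthArea

variable {α : Type*} [MeasurableSpace α] {μ : Measure α}

theorem sq_lintegral_le_measure_mul_lintegral_sq {g : α → ℝ≥0∞} (hg : AEMeasurable g μ) :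
    (∫⁻ x, g x ∂μ) ^ 2 ≤ μ univ * ∫⁻ x, g x ^ 2 ∂μ := by
  have h := ENNReal.lintegral_mul_le_Lp_mul_Lq μ (p := 2) (q := 2) .two_two
    (aemeasurable_const (b := 1)) hg
  calc (∫⁻ x, g x ∂μ) ^ 2
      ≤ ((∫⁻ _, 1 ^ (2 : ℝ) ∂μ) ^ (1 / 2 : ℝ) * (∫⁻ x, g x ^ (2 : ℝ) ∂μ) ^ (1 / 2 : ℝ)) ^ 2 := by
        gcongr
        simpa using h
    _ = μ univ * ∫⁻ x, g x ^ 2 ∂μ := by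
        rw [mul_pow, ← ENNReal.rpow_mul_natCast, ← ENNReal.rpow_mul_natCast]
        simp

theorem lintegral_Ioo_ofReal_inv {a b : ℝ} (ha : 0 < a) (hab : a ≤ b) :
    ∫⁻ r in Ioo a b, .ofReal r⁻¹ = ENNReal.ofReal (Real.log (b / a)) := by
  have hinteg : IntegrableOn (fun r : ℝ ↦ r⁻¹) (Ioc a b) := by
    rw [← intervalIntegrable_iff_integrableOn_Ioc_of_le hab]
    exact intervalIntegrable_inv_iff.2 (.inr (notMem_uIcc_of_lt ha (ha.trans_le hab)))
  rw [restrict_Ioo_eq_restrict_Ioc, ← integral_inv_of_pos ha (ha.trans_le hab),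
    intervalIntegral.integral_of_le hab, ofReal_integral_eq_lintegral_ofReal hinteg]
  filter_upwards [ae_restrict_mem measurableSet_Ioc] with r hr
  exact inv_nonneg.2 (ha.trans hr.1).le

variable {E : Type*} [NormedAddCommGroup E] [NormedSpace ℝ E] {v : ℂ → E} {c : ℂ}

theorem enorm_sub_circleMap_le_lintegral (hv : ContDiff ℝ 1 v) {r : ℝ} (hr : 0 ≤ r)
    {θ₁ θ₂ α β : ℝ} (hθ₁ : θ₁ ∈ Icc α β) (hθ₂ : θ₂ ∈ Icc α β) :
    ‖v (circleMap c r θ₁) - v (circleMap c r θ₂)‖ₑ ≤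
      ∫⁻ θ in Ioo α β, .ofReal r * ‖fderiv ℝ v (circleMap c r θ)‖ₑ := by
  wlog hθ : θ₂ ≤ θ₁ generalizing θ₁ θ₂
  · rw [enorm_sub_rev]
    exact this hθ₂ hθ₁ (not_le.1 hθ).le
  refine (enorm_sub_le_lintegral_deriv_of_contDiffOn_Icc
    (hv.comp (contDiff_circleMap c r)).contDiffOn hθ).trans ?_
  rw [restrict_Ioo_eq_restrict_Icc]
  refine (lintegral_mono_set (Icc_subset_Icc hθ₂.1 hθ₁.2)).trans (lintegral_mono fun θ ↦ ?_)
  rw [((hv.differentiable one_ne_zero _).hasFDerivAt.comp_hasDerivAt θ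
    (hasDerivAt_circleMap c r θ)).deriv, mul_comm (ENNReal.ofReal r)]
  refine (le_opENorm _ _).trans_eq ?_
  rw [← ofReal_norm (circleMap 0 r θ * I), norm_mul, norm_circleMap_zero, norm_I, mul_one,
    abs_of_nonneg hr]

theorem enorm_sub_ray_le_lintegral (hv : ContDiff ℝ 1 v) (θ : ℝ) {a b : ℝ} (hab : a ≤ b) :
    ‖v (circleMap c b θ) - v (circleMap c a θ)‖ₑ ≤
      ∫⁻ r in Ioo a b, ‖fderiv ℝ v (circleMap c r θ)‖ₑ := by
  refine (enorm_sub_le_lintegral_deriv_of_contDiffOn_Icc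
    (hv.comp (contDiff_circleMap_radius c θ)).contDiffOn hab).trans ?_
  rw [restrict_Ioo_eq_restrict_Icc]
  refine lintegral_mono fun r ↦ ?_
  rw [((hv.differentiable one_ne_zero _).hasFDerivAt.comp_hasDerivAt r
    (hasDerivAt_circleMap_radius c r θ)).deriv]
  refine (le_opENorm _ _).trans_eq ?_
  rw [← ofReal_norm (cexp (θ * I)), norm_exp_ofReal_mul_I, ENNReal.ofReal_one, mul_one]

theorem measurable_mul_enorm_fderiv_circleMap_sq (hv : ContDiff ℝ 1 v) :
    Measurable fun p : ℝ × ℝ ↦ ENNReal.ofReal p.1 * ‖fderiv ℝ v (circleMap c p.1 p.2)‖ₑ ^ 2 :=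
  measurable_fst.ennreal_ofReal.mul (((hv.continuous_fderiv one_ne_zero).comp
    (continuous_circleMap_uncurry c)).enorm.measurable.pow_const 2)

theorem enorm_sub_sq_mul_inv_le_lintegral_circleMap (hv : ContDiff ℝ 1 v) {r : ℝ} (hr : 0 < r)
    {p q : ℂ} (hp : p ∈ sphere c r) (hq : q ∈ sphere c r) :
    ‖v p - v q‖ₑ ^ 2 * .ofReal r⁻¹ ≤ .ofReal (2 * π) *
      ∫⁻ θ in Ioo (-π) π, .ofReal r * ‖fderiv ℝ v (circleMap c r θ)‖ₑ ^ 2 := by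
  obtain ⟨θ₁, hθ₁, rfl⟩ := exists_mem_Icc_circleMap_eq hp
  obtain ⟨θ₂, hθ₂, rfl⟩ := exists_mem_Icc_circleMap_eq hq
  have hmeas : Measurable fun θ ↦ ‖fderiv ℝ v (circleMap c r θ)‖ₑ :=
    ((hv.continuous_fderiv one_ne_zero).comp (continuous_circleMap c r)).enorm.measurable
  have hrr : ENNReal.ofReal r * .ofReal r⁻¹ = 1 := by
    rw [← ENNReal.ofReal_mul hr.le, mul_inv_cancel₀ hr.ne', ENNReal.ofReal_one]
  calc ‖v (circleMap c r θ₁) - v (circleMap c r θ₂)‖ₑ ^ 2 * .ofReal r⁻¹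
      ≤ (∫⁻ θ in Ioo (-π) π, .ofReal r * ‖fderiv ℝ v (circleMap c r θ)‖ₑ) ^ 2 * .ofReal r⁻¹ := by
        gcongr
        exact enorm_sub_circleMap_le_lintegral hv hr.le hθ₁ hθ₂
    _ ≤ (.ofReal (2 * π) *
          ∫⁻ θ in Ioo (-π) π, (.ofReal r * ‖fderiv ℝ v (circleMap c r θ)‖ₑ) ^ 2) *
            .ofReal r⁻¹ := by
        gcongr
        refine (sq_lintegral_le_measure_mul_lintegral_sq
          (hmeas.const_mul _).aemeasurable).trans_eq ?_
        rw [Measure.restrict_apply_univ, Real.volume_Ioo, sub_neg_eq_add, two_mul]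
    _ = _ := by
        simp_rw [mul_pow, sq (ENNReal.ofReal r), mul_assoc]
        rw [lintegral_const_mul' _ _ ENNReal.ofReal_ne_top, mul_comm (ENNReal.ofReal r), mul_assoc,
          hrr, mul_one]

theorem enorm_sub_sq_le_lintegral_ray (hv : ContDiff ℝ 1 v) (θ : ℝ) {a b : ℝ} (ha : 0 < a)
    (hab : a ≤ b) :
    ‖v (circleMap c b θ) - v (circleMap c a θ)‖ₑ ^ 2 ≤ .ofReal (b / a) *
      ∫⁻ r in Ioo a b, .ofReal r * ‖fderiv ℝ v (circleMap c r θ)‖ₑ ^ 2 := by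
  have hmeas : Measurable fun r ↦ ‖fderiv ℝ v (circleMap c r θ)‖ₑ :=
    ((hv.continuous_fderiv one_ne_zero).comp
      (contDiff_circleMap_radius c θ (n := 0)).continuous).enorm.measurable
  calc ‖v (circleMap c b θ) - v (circleMap c a θ)‖ₑ ^ 2
      ≤ (∫⁻ r in Ioo a b, ‖fderiv ℝ v (circleMap c r θ)‖ₑ) ^ 2 := by
        gcongr
        exact enorm_sub_ray_le_lintegral hv θ hab
    _ ≤ .ofReal (b - a) * ∫⁻ r in Ioo a b, ‖fderiv ℝ v (circleMap c r θ)‖ₑ ^ 2 := by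
        refine (sq_lintegral_le_measure_mul_lintegral_sq hmeas.aemeasurable).trans_eq ?_
        rw [Measure.restrict_apply_univ, Real.volume_Ioo]
    _ ≤ .ofReal (b / a * a) * ∫⁻ r in Ioo a b, ‖fderiv ℝ v (circleMap c r θ)‖ₑ ^ 2 := by
        gcongr
        rw [div_mul_cancel₀ _ ha.ne']
        linarith
    _ = .ofReal (b / a) * ∫⁻ r in Ioo a b, .ofReal a * ‖fderiv ℝ v (circleMap c r θ)‖ₑ ^ 2 := by
        rw [ENNReal.ofReal_mul (div_nonneg (ha.le.trans hab) ha.le), mul_assoc,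
          lintegral_const_mul' _ _ ENNReal.ofReal_ne_top]
    _ ≤ _ := by
        gcongr _ * ?_
        refine setLIntegral_mono' measurableSet_Ioo fun r hr ↦ ?_
        gcongr
        exact hr.1.le

variable {a b l : ℝ}

theorem ofReal_sq_mul_log_le_of_contDiff (hv : ContDiff ℝ 1 v) (ha : 0 < a) (hab : a ≤ b)
    (hl : 0 ≤ l)
    (h : ∀ r ∈ Ioo a b, ∃ p ∈ sphere c r, ∃ q ∈ sphere c r, l ≤ ‖v p - v q‖) :
    .ofReal (l ^ 2 * Real.log (b / a)) ≤
      .ofReal (2 * π) * ∫⁻ z in ball c b \ closedBall c a, ‖fderiv ℝ v z‖ₑ ^ 2 := by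
  have hcircle : ∀ r ∈ Ioo a b, .ofReal (l ^ 2) * .ofReal r⁻¹ ≤ .ofReal (2 * π) *
      ∫⁻ θ in Ioo (-π) π, .ofReal r * ‖fderiv ℝ v (circleMap c r θ)‖ₑ ^ 2 := by
    intro r hr
    obtain ⟨p, hp, q, hq, hpq⟩ := h r hr
    refine le_trans ?_
      (enorm_sub_sq_mul_inv_le_lintegral_circleMap hv (ha.trans hr.1) hp hq)
    rw [ENNReal.ofReal_pow hl, ← ofReal_norm (v p - v q)]
    gcongr
  have hmem : ∀ r ∈ Ioo a b, ∀ θ ∈ Ioo (-π) π, circleMap c r θ ∈ ball c b \ closedBall c a := by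
    intro r hr θ _
    rw [Set.mem_sdiff, mem_ball, mem_closedBall, not_le,
      mem_sphere.1 (circleMap_mem_sphere c (ha.trans hr.1).le θ)]
    exact ⟨hr.2, hr.1⟩
  calc .ofReal (l ^ 2 * Real.log (b / a))
      = ∫⁻ r in Ioo a b, .ofReal (l ^ 2) * .ofReal r⁻¹ := by
        rw [lintegral_const_mul' _ _ ENNReal.ofReal_ne_top, lintegral_Ioo_ofReal_inv ha hab,
          ENNReal.ofReal_mul (sq_nonneg l)]
    _ ≤ ∫⁻ r in Ioo a b, .ofReal (2 * π) *
          ∫⁻ θ in Ioo (-π) π, .ofReal r * ‖fderiv ℝ v (circleMap c r θ)‖ₑ ^ 2 :=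
        setLIntegral_mono' measurableSet_Ioo hcircle
    _ = .ofReal (2 * π) * ∫⁻ p in Ioo a b ×ˢ Ioo (-π) π,
          .ofReal p.1 * ‖fderiv ℝ v (circleMap c p.1 p.2)‖ₑ ^ 2 := by
        rw [lintegral_const_mul' _ _ ENNReal.ofReal_ne_top, Measure.volume_eq_prod,
          setLIntegral_prod _ (measurable_mul_enorm_fderiv_circleMap_sq hv).aemeasurable]
    _ ≤ _ := by
        gcongr
        exact setLIntegral_circleMap_le
          ((hv.continuous_fderiv one_ne_zero).enorm.measurable.pow_const 2) ha.le (by linarith)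
          (measurableSet_ball.diff measurableSet_closedBall) hmem

theorem ofReal_sq_mul_sub_le_of_contDiff (hv : ContDiff ℝ 1 v) (ha : 0 < a) (hab : a ≤ b)
    (hl : 0 ≤ l) {α β : ℝ} (hαβ : β - α ≤ 2 * π) {S : Set ℂ} (hS : MeasurableSet S)
    (hmem : ∀ r ∈ Ioo a b, ∀ θ ∈ Ioo α β, circleMap c r θ ∈ S)
    (h : ∀ θ ∈ Ioo α β, l ≤ ‖v (circleMap c b θ) - v (circleMap c a θ)‖) :
    .ofReal (l ^ 2 * (β - α)) ≤ .ofReal (b / a) * ∫⁻ z in S, ‖fderiv ℝ v z‖ₑ ^ 2 := by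
  have hray : ∀ θ ∈ Ioo α β, .ofReal (l ^ 2) ≤ .ofReal (b / a) *
      ∫⁻ r in Ioo a b, .ofReal r * ‖fderiv ℝ v (circleMap c r θ)‖ₑ ^ 2 := by
    intro θ hθ
    refine le_trans ?_ (enorm_sub_sq_le_lintegral_ray hv θ ha hab)
    rw [ENNReal.ofReal_pow hl, ← ofReal_norm]
    gcongr
    exact h θ hθ
  calc .ofReal (l ^ 2 * (β - α))
      = ∫⁻ _ in Ioo α β, .ofReal (l ^ 2) := by
        rw [lintegral_const, Measure.restrict_apply_univ, Real.volume_Ioo,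
          ENNReal.ofReal_mul (sq_nonneg l)]
    _ ≤ ∫⁻ θ in Ioo α β, .ofReal (b / a) *
          ∫⁻ r in Ioo a b, .ofReal r * ‖fderiv ℝ v (circleMap c r θ)‖ₑ ^ 2 :=
        setLIntegral_mono' measurableSet_Ioo hray
    _ = .ofReal (b / a) * ∫⁻ p in Ioo a b ×ˢ Ioo α β,
          .ofReal p.1 * ‖fderiv ℝ v (circleMap c p.1 p.2)‖ₑ ^ 2 := by
        rw [lintegral_const_mul' _ _ ENNReal.ofReal_ne_top, Measure.volume_eq_prod,
          setLIntegral_prod_symm _ (measurable_mul_enorm_fderiv_circleMap_sq hv).aemeasurable]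
    _ ≤ _ := by
        gcongr
        exact setLIntegral_circleMap_le
          ((hv.continuous_fderiv one_ne_zero).enorm.measurable.pow_const 2) ha.le hαβ hS hmem

end LengthArea

section StrongLengthArea

theorem eLpNorm_two_sq {α F : Type*} [MeasurableSpace α] {μ : Measure α} [NormedAddCommGroup F]
    (f : α → F) : eLpNorm f 2 μ ^ 2 = ∫⁻ x, ‖f x‖ₑ ^ 2 ∂μ := by
  simpa using eLpNorm_nnreal_pow_eq_lintegral (f := f) (μ := μ) (p := 2) two_ne_zero

theorem eLpNorm_le_add_eLpNorm_sub {α F : Type*} [MeasurableSpace α] {μ : Measure α}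
    [NormedAddCommGroup F] {f g : α → F} {p : ℝ≥0∞} (hf : AEStronglyMeasurable f μ)
    (hg : AEStronglyMeasurable g μ) (hp : 1 ≤ p) :
    eLpNorm g p μ ≤ eLpNorm f p μ + eLpNorm (g - f) p μ := by
  simpa only [add_sub_cancel] using eLpNorm_add_le hf (hg.sub hf) hp

namespace HasStrongFDeriv

theorem le_mul_setLIntegral_of_contDiff {X F : Type*} [NormedAddCommGroup X] [NormedSpace ℝ X]
    [MeasurableSpace X] [BorelSpace X] [FiniteDimensional ℝ X] [NormedAddCommGroup F]
    [NormedSpace ℝ F] {μ : Measure X} {f : X → F} {D : X → X →L[ℝ] F}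
    (h : HasStrongFDeriv f D μ) {K A : Set X} (hK : IsCompact K) (hAK : A ⊆ K) {k m : ℝ≥0∞}
    (hk : k ≠ ⊤) {ε : ℝ} (hε : 0 < ε)
    (hm : ∀ g : X → F, ContDiff ℝ ∞ g → (∀ z ∈ K, ‖f z - g z‖ < ε) →
      m ≤ k * ∫⁻ z in A, ‖fderiv ℝ g z‖ₑ ^ 2 ∂μ) :
    m ≤ k * ∫⁻ z in A, ‖D z‖ₑ ^ 2 ∂μ := by
  obtain ⟨u, hu, huf, huD⟩ := h.exists_approx
  have hunif := (tendstoLocallyUniformlyOn_iff_tendstoUniformlyOn_of_compact hK).1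
    huf.tendstoLocallyUniformlyOn
  have hD := (h.memLp K hK).mono_measure (Measure.restrict_mono_set μ hAK)
  have hDA : Tendsto (fun n ↦ eLpNorm (fderiv ℝ (u n) - D) 2 (μ.restrict A)) atTop (𝓝 0) :=
    tendsto_of_tendsto_of_tendsto_of_le_of_le tendsto_const_nhds (huD K hK) (fun _ ↦ zero_le)
      fun _ ↦ eLpNorm_mono_measure _ (Measure.restrict_mono_set μ hAK)
  have hlim : Tendsto (fun n ↦ k * (eLpNorm D 2 (μ.restrict A) +
      eLpNorm (fderiv ℝ (u n) - D) 2 (μ.restrict A)) ^ 2) atTop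
      (𝓝 (k * eLpNorm D 2 (μ.restrict A) ^ 2)) := by
    have hadd := tendsto_const_nhds (x := eLpNorm D 2 (μ.restrict A)) |>.add hDA
    rw [add_zero] at hadd
    exact ENNReal.Tendsto.const_mul (((ENNReal.continuous_pow 2).tendsto _).comp hadd) (.inr hk)
  rw [← eLpNorm_two_sq]
  refine ge_of_tendsto hlim ?_
  filter_upwards [Metric.tendstoUniformlyOn_iff.1 hunif ε hε] with n hn
  refine (hm (u n) (hu n) fun z hz ↦ (dist_eq_norm _ _).symm.trans_lt (hn z hz)).trans ?_
  rw [← eLpNorm_two_sq]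
  have hdu : AEStronglyMeasurable (fderiv ℝ (u n)) (μ.restrict A) :=
    ((hu n).continuous_fderiv (by simp)).aestronglyMeasurable
  gcongr
  exact eLpNorm_le_add_eLpNorm_sub hD.1 hdu one_le_two

theorem ofReal_sq_mul_le_of_contDiff {X F : Type*} [NormedAddCommGroup X] [NormedSpace ℝ X]
    [MeasurableSpace X] [BorelSpace X] [FiniteDimensional ℝ X] [NormedAddCommGroup F]
    [NormedSpace ℝ F] {μ : Measure X} {f : X → F} {D : X → X →L[ℝ] F}
    (h : HasStrongFDeriv f D μ) {K A : Set X} (hK : IsCompact K) (hAK : A ⊆ K) {k : ℝ≥0∞}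
    (hk : k ≠ ⊤) {l x : ℝ} (hl : 0 ≤ l)
    (hlx : ∀ l' ∈ Ioo 0 l, ∀ g : X → F, ContDiff ℝ ∞ g →
      (∀ p ∈ K, ∀ q ∈ K, l ≤ ‖f p - f q‖ → l' ≤ ‖g p - g q‖) →
        .ofReal (l' ^ 2 * x) ≤ k * ∫⁻ z in A, ‖fderiv ℝ g z‖ₑ ^ 2 ∂μ) :
    .ofReal (l ^ 2 * x) ≤ k * ∫⁻ z in A, ‖D z‖ₑ ^ 2 ∂μ := by
  obtain rfl | hl := hl.eq_or_lt
  · simp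
  have hlim : Tendsto (fun l' : ℝ ↦ ENNReal.ofReal (l' ^ 2 * x)) (𝓝[<] l)
      (𝓝 (.ofReal (l ^ 2 * x))) :=
    (ENNReal.continuous_ofReal.comp (by fun_prop)).tendsto' _ _ rfl |>.mono_left nhdsWithin_le_nhds
  refine le_of_tendsto hlim ?_
  filter_upwards [Ioo_mem_nhdsLT hl] with l' hl'
  refine h.le_mul_setLIntegral_of_contDiff hK hAK hk (half_pos (sub_pos.2 hl'.2))
    fun g hg hfg ↦ hlx l' hl' g hg fun p hp q hq hpq ↦ ?_
  have hsplit : f p - f q = (f p - g p) + (g p - g q) - (f q - g q) := by abel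
  have := hsplit ▸ (norm_sub_le ((f p - g p) + (g p - g q)) (f q - g q)).trans
    (add_le_add_left (norm_add_le _ _) _)
  linarith [hfg p hp, hfg q hq]

variable {E : Type*} [NormedAddCommGroup E] [NormedSpace ℝ E] {f : ℂ → E} {D : ℂ → ℂ →L[ℝ] E}
  {c : ℂ} {a b l : ℝ}

theorem ofReal_sq_mul_log_le (h : HasStrongFDeriv f D volume) (ha : 0 < a) (hab : a ≤ b)
    (hl : 0 ≤ l)
    (hosc : ∀ r ∈ Ioo a b, ∃ p ∈ sphere c r, ∃ q ∈ sphere c r, l ≤ ‖f p - f q‖) :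
    .ofReal (l ^ 2 * Real.log (b / a)) ≤
      .ofReal (2 * π) * ∫⁻ z in ball c b \ closedBall c a, ‖D z‖ₑ ^ 2 := by
  refine h.ofReal_sq_mul_le_of_contDiff (isCompact_closedBall c b)
    (sdiff_subset.trans ball_subset_closedBall) ENNReal.ofReal_ne_top hl fun l' hl' g hg hfg ↦ ?_
  refine ofReal_sq_mul_log_le_of_contDiff (hg.of_le (by simp)) ha hab hl'.1.le fun r hr ↦ ?_
  obtain ⟨p, hp, q, hq, hpq⟩ := hosc r hr
  have hsub : sphere c r ⊆ closedBall c b :=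
    sphere_subset_closedBall.trans (closedBall_subset_closedBall hr.2.le)
  exact ⟨p, hp, q, hq, hfg p (hsub hp) q (hsub hq) hpq⟩

theorem ofReal_sq_mul_sub_le (h : HasStrongFDeriv f D volume) (ha : 0 < a) (hab : a ≤ b)
    (hl : 0 ≤ l) {α β : ℝ} (hαβ : β - α ≤ 2 * π) {S : Set ℂ} (hS : MeasurableSet S)
    (hSb : S ⊆ ball c b) (hmem : ∀ r ∈ Ioo a b, ∀ θ ∈ Ioo α β, circleMap c r θ ∈ S)
    (hosc : ∀ θ ∈ Ioo α β, l ≤ ‖f (circleMap c b θ) - f (circleMap c a θ)‖) :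
    .ofReal (l ^ 2 * (β - α)) ≤ .ofReal (b / a) * ∫⁻ z in S, ‖D z‖ₑ ^ 2 := by
  refine h.ofReal_sq_mul_le_of_contDiff (isCompact_closedBall c b)
    (hSb.trans ball_subset_closedBall) ENNReal.ofReal_ne_top hl fun l' hl' g hg hfg ↦ ?_
  refine ofReal_sq_mul_sub_le_of_contDiff (hg.of_le (by simp)) ha hab hl'.1.le hαβ hS hmem
    fun θ hθ ↦ hfg _ (circleMap_mem_closedBall c (ha.le.trans hab) θ) _
      (closedBall_subset_closedBall hab (circleMap_mem_closedBall c ha.le θ)) (hosc θ hθ)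

theorem ofReal_sq_le_of_forall_annulus (h : HasStrongFDeriv f D volume) (ha : 0 < a) (hl : 0 ≤ l)
    (hosc : ∀ r ∈ Ioo a (2 * a), ∃ p ∈ sphere c r, ∃ q ∈ sphere c r, l ≤ ‖f p - f q‖) :
    .ofReal (l ^ 2) ≤ 10 * ∫⁻ z in ball c (2 * a), ‖D z‖ₑ ^ 2 := by
  have hlog : 0.69 < Real.log 2 := by linarith [Real.log_two_gt_d9]
  have hring := h.ofReal_sq_mul_log_le ha (by linarith) hl hosc
  rw [mul_div_cancel_right₀ _ ha.ne'] at hring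
  calc .ofReal (l ^ 2)
      = .ofReal (Real.log 2)⁻¹ * .ofReal (l ^ 2 * Real.log 2) := by
        rw [← ENNReal.ofReal_mul (by positivity)]
        congr 1
        field_simp
    _ ≤ .ofReal (Real.log 2)⁻¹ * (.ofReal (2 * π) * ∫⁻ z in ball c (2 * a), ‖D z‖ₑ ^ 2) := by
        gcongr
        exact hring.trans (by gcongr; exact sdiff_subset)
    _ = .ofReal ((Real.log 2)⁻¹ * (2 * π)) * ∫⁻ z in ball c (2 * a), ‖D z‖ₑ ^ 2 := by
        rw [← mul_assoc, ← ENNReal.ofReal_mul (by positivity)]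
    _ ≤ 10 * ∫⁻ z in ball c (2 * a), ‖D z‖ₑ ^ 2 := by
        gcongr
        rw [← ENNReal.ofReal_ofNat, inv_mul_eq_div]
        refine ENNReal.ofReal_le_ofReal ?_
        rw [div_le_iff₀ (by linarith)]
        linarith [Real.pi_lt_d2]

theorem ofReal_sq_le_of_forall_ray (h : HasStrongFDeriv f D volume) {s : ℝ} (hs : 0 < s)
    (ha : a ∈ Ioo (s / 2) s) (hb : b ∈ Ioo s (2 * s)) (hl : 0 ≤ l)
    (hosc : ∀ θ, l ≤ ‖f (circleMap c b θ) - f (circleMap c a θ)‖) :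
    .ofReal (l ^ 2) ≤ ∫⁻ z in ball c (2 * s), ‖D z‖ₑ ^ 2 := by
  have ha₀ : 0 < a := (half_pos hs).trans ha.1
  have hab : a ≤ b := (ha.2.trans hb.1).le
  have hsector := h.ofReal_sq_mul_sub_le (α := -π) (β := π) ha₀ hab hl (by linarith)
    measurableSet_ball le_rfl
    (fun r hr θ _ ↦ mem_ball.2 (by
      rw [mem_sphere.1 (circleMap_mem_sphere c (ha₀.trans hr.1).le θ)]
      exact hr.2)) fun θ _ ↦ hosc θ
  have hba : b / a ≤ 2 * π := by
    rw [div_le_iff₀ ha₀]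
    nlinarith [ha.1, hb.2, Real.pi_gt_three]
  rw [sub_neg_eq_add, ← two_mul, mul_comm, ENNReal.ofReal_mul (by positivity)] at hsector
  refine (ENNReal.mul_le_mul_iff_right ?_ ENNReal.ofReal_ne_top).1
    (hsector.trans (mul_le_mul' (ENNReal.ofReal_le_ofReal hba)
      (lintegral_mono_set (ball_subset_ball hb.2.le))))
  positivity

theorem ofReal_sq_sub_le {v : ℂ → ℝ} {D : ℂ → ℂ →L[ℝ] ℝ} (h : HasStrongFDeriv v D volume) {s : ℝ}
    (hs : 0 < s) {α β : ℝ} (hαβ : α ≤ β) (hα : ∀ r ∈ Ioo (s / 2) s, ∃ p ∈ sphere c r, v p ≤ α)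
    (hβ : ∀ r ∈ Ioo s (2 * s), ∃ p ∈ sphere c r, β ≤ v p) :
    .ofReal ((β - α) ^ 2) ≤ 90 * ∫⁻ z in ball c (2 * s), ‖D z‖ₑ ^ 2 := by
  set l := (β - α) / 3 with hl_def
  have hl : 0 ≤ l := by linarith
  suffices .ofReal (l ^ 2) ≤ 10 * ∫⁻ z in ball c (2 * s), ‖D z‖ₑ ^ 2 by
    calc .ofReal ((β - α) ^ 2) = 9 * .ofReal (l ^ 2) := by
          rw [← ENNReal.ofReal_ofNat, ← ENNReal.ofReal_mul (by norm_num), hl_def]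
          congr 1
          ring
      _ ≤ 9 * (10 * ∫⁻ z in ball c (2 * s), ‖D z‖ₑ ^ 2) := by gcongr
      _ = 90 * ∫⁻ z in ball c (2 * s), ‖D z‖ₑ ^ 2 := by rw [← mul_assoc]; norm_num
  by_cases hinner : ∀ r ∈ Ioo (s / 2) (2 * (s / 2)),
      ∃ p ∈ sphere c r, ∃ q ∈ sphere c r, l ≤ ‖v p - v q‖
  · refine (h.ofReal_sq_le_of_forall_annulus (half_pos hs) hl hinner).trans ?_
    gcongr
    exact half_le_self hs.le
  by_cases houter : ∀ r ∈ Ioo s (2 * s), ∃ p ∈ sphere c r, ∃ q ∈ sphere c r, l ≤ ‖v p - v q‖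
  · exact h.ofReal_sq_le_of_forall_annulus hs hl houter
  push Not at hinner houter
  rw [mul_div_cancel₀ s two_ne_zero] at hinner
  obtain ⟨a, ha, hinner⟩ := hinner
  obtain ⟨b, hb, houter⟩ := houter
  obtain ⟨p, hp, hpα⟩ := hα a ha
  obtain ⟨q, hq, hqβ⟩ := hβ b hb
  refine (h.ofReal_sq_le_of_forall_ray hs ha hb hl fun θ ↦ ?_).trans
    (le_mul_of_one_le_left' (by norm_num))
  have hva := abs_lt.1 (hinner p hp _ (circleMap_mem_sphere c (by linarith [ha.1]) θ))
  have hvb := abs_lt.1 (houter q hq _ (circleMap_mem_sphere c (by linarith [hb.1]) θ))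
  refine le_trans ?_ (le_abs_self _)
  linarith [hva.1, hvb.2]

end HasStrongFDeriv

end StrongLengthArea

section SphereCrossing

theorem exists_mem_sphere_of_isPreconnected {X : Type*} [PseudoMetricSpace X] {K : Set X}
    (hK : IsPreconnected K) {c x y : X} {r : ℝ} (hx : x ∈ K) (hy : y ∈ K) (hxr : dist x c ≤ r)
    (hry : r ≤ dist y c) : ∃ p ∈ K, p ∈ sphere c r :=
  hK.intermediate_value (f := fun z ↦ dist z c) hx hy (by fun_prop) ⟨hxr, hry⟩

theorem not_isBounded_ray {E : Type*} [NormedAddCommGroup E] [NormedSpace ℝ E] (w : E) {d : E}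
    (hd : d ≠ 0) : ¬Bornology.IsBounded ((fun t : ℝ ↦ w + t • d) '' Ici 0) := by
  intro hbdd
  obtain ⟨M, hM⟩ := isBounded_iff_forall_norm_le.1 hbdd
  have hd' : 0 < ‖d‖ := norm_pos_iff.2 hd
  have hM₀ : 0 ≤ M := (norm_nonneg _).trans (hM _ (mem_image_of_mem _ self_mem_Ici))
  set t := (M + ‖w‖ + 1) / ‖d‖ with ht_def
  have ht : 0 ≤ t := by positivity
  have hlower : ‖t • d‖ ≤ ‖w + t • d‖ + ‖w‖ := by
    simpa using norm_sub_le (w + t • d) w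
  rw [norm_smul, Real.norm_of_nonneg ht, ht_def, div_mul_cancel₀ _ hd'.ne'] at hlower
  linarith [hM _ (mem_image_of_mem _ ht)]

variable {X E : Type*} [PseudoMetricSpace X] [NormedAddCommGroup E] [NormedSpace ℝ E]

theorem exists_mem_sphere_norm_sub_le (G : X ≃ₜ E) {c z : X} {r : ℝ} (hr : 0 ≤ r)
    (hrz : r ≤ dist z c) : ∃ p ∈ sphere c r, ‖G p - G c‖ ≤ ‖G z - G c‖ := by
  have hconn : IsPreconnected (G.symm '' segment ℝ (G c) (G z)) :=
    (convex_segment _ _).isPreconnected.image _ G.symm.continuous.continuousOn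
  obtain ⟨_, ⟨w, hw, rfl⟩, hp⟩ := exists_mem_sphere_of_isPreconnected hconn
    ⟨G c, left_mem_segment _ _ _, G.symm_apply_apply c⟩
    ⟨G z, right_mem_segment _ _ _, G.symm_apply_apply z⟩ (by rwa [dist_self]) hrz
  exact ⟨_, hp, by rw [G.apply_symm_apply]; exact norm_sub_le_of_mem_segment hw⟩

theorem exists_mem_sphere_eq_add_smul [ProperSpace X] (G : X ≃ₜ E) {c z : X} {r : ℝ}
    (hr : dist z c ≤ r) {d : E} (hd : d ≠ 0) :
    ∃ p ∈ sphere c r, ∃ t : ℝ, 0 ≤ t ∧ G p = G z + t • d := by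
  set ray := (fun t : ℝ ↦ G z + t • d) '' Ici 0
  have hconn : IsPreconnected (G.symm '' ray) :=
    (isPreconnected_Ici.image _ (by fun_prop)).image _ G.symm.continuous.continuousOn
  have hz : z ∈ G.symm '' ray := ⟨G z, ⟨0, self_mem_Ici, by simp⟩, G.symm_apply_apply z⟩
  obtain ⟨y, hy, hry⟩ : ∃ y ∈ G.symm '' ray, r ≤ dist y c := by
    by_contra! hball
    have hbdd := ((isCompact_closedBall c r).image G.continuous).isBounded
    exact not_isBounded_ray (G z) hd (hbdd.subset fun w hw ↦
      ⟨G.symm w, (hball _ (mem_image_of_mem _ hw)).le, G.apply_symm_apply w⟩)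
  obtain ⟨_, ⟨_, ⟨t, ht, rfl⟩, rfl⟩, hp⟩ := exists_mem_sphere_of_isPreconnected hconn hz hy hr hry
  exact ⟨_, hp, t, ht, G.apply_symm_apply _⟩

theorem exists_mem_sphere_le_norm_sub [ProperSpace X] (G : X ≃ₜ E) {c z : X} {r : ℝ}
    (hr : dist z c ≤ r) (hz : G z ≠ G c) : ∃ p ∈ sphere c r, ‖G z - G c‖ ≤ ‖G p - G c‖ := by
  obtain ⟨p, hp, t, ht, hpt⟩ := exists_mem_sphere_eq_add_smul G hr (sub_ne_zero.2 hz)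
  refine ⟨p, hp, ?_⟩
  have hsub : G p - G c = (1 + t) • (G z - G c) := by rw [hpt]; module
  rw [hsub, norm_smul, Real.norm_of_nonneg (by positivity)]
  exact le_mul_of_one_le_left (norm_nonneg _) (by linarith)

theorem exists_mem_sphere_mem_sphere_le_norm_sub [ProperSpace X] (G : X ≃ₜ E) {c z : X} {r : ℝ}
    (hr : dist z c ≤ r) (hz : G z ≠ G c) :
    ∃ p ∈ sphere c r, ∃ q ∈ sphere c r, ‖G z - G c‖ ≤ ‖G p - G q‖ := by
  have hd := sub_ne_zero.2 hz
  obtain ⟨p, hp, t, ht, hpt⟩ := exists_mem_sphere_eq_add_smul G hr hd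
  obtain ⟨q, hq, u, hu, hqu⟩ := exists_mem_sphere_eq_add_smul G
    ((dist_self c).trans_le (dist_nonneg.trans hr)) (neg_ne_zero.2 hd)
  refine ⟨p, hp, q, hq, ?_⟩
  have hsub : G p - G q = (1 + t + u) • (G z - G c) := by rw [hpt, hqu]; module
  rw [hsub, norm_smul, Real.norm_of_nonneg (by positivity)]
  exact le_mul_of_one_le_left (norm_nonneg _) (by linarith)

theorem exists_image_ball_subset_ball [ProperSpace X] [Nontrivial E] (G : X ≃ₜ E) (c : X) {ρ : ℝ}
    (hρ : 0 < ρ) :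
    ∃ s > 0, G '' ball c s ⊆ ball (G c) ρ ∧ ∃ z ∈ sphere c s, ρ ≤ ‖G z - G c‖ := by
  set far := {z | ρ ≤ ‖G z - G c‖}
  have hclosed : IsClosed far := isClosed_le continuous_const (by fun_prop)
  have hne : far.Nonempty := by
    obtain ⟨d, hd⟩ := NormedSpace.exists_lt_norm ℝ E ρ
    exact ⟨G.symm (G c + d), by simpa [far] using hd.le⟩
  obtain ⟨z, hz, hdist⟩ := hclosed.exists_infDist_eq_dist hne c
  have hc : c ∉ far := by simpa [far] using hρ
  refine ⟨infDist c far, (hclosed.notMem_iff_infDist_pos hne).1 hc, ?_,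
    z, by rw [mem_sphere, dist_comm, hdist], hz⟩
  rintro _ ⟨x, hx, rfl⟩
  rw [mem_ball, dist_eq_norm]
  by_contra! hfar
  exact (infDist_le_dist_of_mem (show x ∈ far from hfar)).not_gt (by rwa [dist_comm])

end SphereCrossing

section LogProfile

/-- A bounded version of `log √x` on `[0, ∞)`: up to bounded error it is `log √x - log √b` for
`a ≤ x ≤ b` and constant elsewhere. The function `w ↦ logProfile a b (‖w - ζ‖ ^ 2)` plays the role
of the extremal function of the ring `√a < ‖w - ζ‖ < √b`, and is smooth on the whole space. -/
noncomputable def logProfile (a b x : ℝ) : ℝ := (Real.log (x + a) - Real.log (x + b)) / 2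

variable {a b : ℝ}

theorem hasDerivAt_logProfile (ha : 0 < a) (hb : 0 < b) {x : ℝ} (hx : 0 ≤ x) :
    HasDerivAt (logProfile a b) ((b - a) / (2 * ((x + a) * (x + b)))) x := by
  have hlog {c : ℝ} (hc : 0 < c) : HasDerivAt (fun x ↦ Real.log (x + c)) (1 / (x + c)) x :=
    ((hasDerivAt_id x).add_const c).log (by positivity)
  refine (((hlog ha).sub (hlog hb)).div_const 2).congr_deriv ?_
  have hxa : x + a ≠ 0 := by positivity
  have hxb : x + b ≠ 0 := by positivity
  field_simp
  ring

theorem monotoneOn_logProfile (ha : 0 < a) (hab : a ≤ b) : MonotoneOn (logProfile a b) (Ici 0) := by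
  have hderiv {x : ℝ} (hx : x ∈ Ici (0 : ℝ)) := hasDerivAt_logProfile ha (ha.trans_le hab) hx
  refine monotoneOn_of_hasDerivWithinAt_nonneg (convex_Ici 0)
    (fun x hx ↦ (hderiv hx).continuousAt.continuousWithinAt)
    (fun x hx ↦ (hderiv (interior_subset hx)).hasDerivWithinAt) fun x hx ↦ ?_
  have hx₀ : 0 ≤ x := interior_subset hx
  have hb : 0 < b := ha.trans_le hab
  exact div_nonneg (sub_nonneg.2 hab) (by positivity)

theorem tendsto_logProfile_atTop (a b : ℝ) : Tendsto (logProfile a b) atTop (𝓝 0) := by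
  have hlog (c : ℝ) := Real.tendsto_log_comp_add_sub_log c
  have hprofile := ((hlog a).sub (hlog b)).div_const 2
  simp only [sub_sub_sub_cancel_right, sub_zero, zero_div] at hprofile
  exact hprofile

theorem half_log_div_sub_log_two_le_logProfile_sub (ha : 0 < a) (hb : 0 < b) :
    Real.log (b / a) / 2 - Real.log 2 ≤ logProfile a b b - logProfile a b a := by
  have hsum : Real.log b ≤ Real.log (b + a) := Real.log_le_log hb (by linarith)
  have hdouble {x : ℝ} (hx : 0 < x) : Real.log (x + x) = Real.log 2 + Real.log x := by
    rw [← two_mul, Real.log_mul two_ne_zero hx.ne']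
  rw [logProfile, logProfile, hdouble ha, hdouble hb, add_comm a b, Real.log_div hb.ne' ha.ne']
  linarith

variable {E : Type*} [NormedAddCommGroup E] [InnerProductSpace ℝ E]

theorem contDiff_logProfile_norm_sub_sq (ha : 0 < a) (hb : 0 < b) (ζ : E) {n : WithTop ℕ∞} :
    ContDiff ℝ n fun w ↦ logProfile a b (‖w - ζ‖ ^ 2) := by
  have hsq : ContDiff ℝ n fun w : E ↦ ‖w - ζ‖ ^ 2 := (contDiff_id.sub contDiff_const).norm_sq ℝ
  exact (((hsq.add contDiff_const).log fun w ↦ by positivity).sub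
    ((hsq.add contDiff_const).log fun w ↦ by positivity)).div_const 2

theorem norm_fderiv_logProfile_norm_sub_sq (ha : 0 < a) (hab : a ≤ b) (ζ w : E) :
    ‖fderiv ℝ (fun w ↦ logProfile a b (‖w - ζ‖ ^ 2)) w‖ =
      (b - a) * ‖w - ζ‖ / ((‖w - ζ‖ ^ 2 + a) * (‖w - ζ‖ ^ 2 + b)) := by
  have hb : 0 < b := ha.trans_le hab
  have hsq : HasFDerivAt (fun w ↦ ‖w - ζ‖ ^ 2) ((2 : ℝ) • innerSL ℝ (w - ζ)) w := by
    simpa [ofNat_smul_eq_nsmul] using ((hasFDerivAt_id (𝕜 := ℝ) w).sub_const ζ).norm_sq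
  have hderiv := (hasDerivAt_logProfile ha hb (sq_nonneg ‖w - ζ‖)).comp_hasFDerivAt w hsq
  have hcoef : 0 ≤ (b - a) / (2 * ((‖w - ζ‖ ^ 2 + a) * (‖w - ζ‖ ^ 2 + b))) :=
    div_nonneg (sub_nonneg.2 hab) (by positivity)
  rw [HasFDerivAt.fderiv (f := fun w ↦ logProfile a b (‖w - ζ‖ ^ 2)) hderiv, norm_smul, norm_smul,
    innerSL_apply_norm, Real.norm_of_nonneg hcoef, Real.norm_ofNat]
  field_simp

theorem norm_fderiv_logProfile_norm_sub_sq_sq_le (ha : 0 < a) (hab : a ≤ b) (ζ w : E) :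
    ‖fderiv ℝ (fun w ↦ logProfile a b (‖w - ζ‖ ^ 2)) w‖ ^ 2 ≤
      (b - a) / ((‖w - ζ‖ ^ 2 + a) * (‖w - ζ‖ ^ 2 + b)) := by
  have hb : 0 < b := ha.trans_le hab
  set q := ‖w - ζ‖
  have hq : q ^ 2 * (b - a) ≤ (q ^ 2 + a) * (q ^ 2 + b) := by
    nlinarith [mul_pos ha hb, mul_nonneg (sq_nonneg q) ha.le, sq_nonneg (q ^ 2)]
  calc ‖fderiv ℝ (fun w ↦ logProfile a b (‖w - ζ‖ ^ 2)) w‖ ^ 2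
      = (b - a) / ((q ^ 2 + a) * (q ^ 2 + b)) *
          (q ^ 2 * (b - a) / ((q ^ 2 + a) * (q ^ 2 + b))) := by
        rw [norm_fderiv_logProfile_norm_sub_sq ha hab]
        ring
    _ ≤ (b - a) / ((q ^ 2 + a) * (q ^ 2 + b)) :=
        mul_le_of_le_one_right (div_nonneg (sub_nonneg.2 hab) (by positivity))
          ((div_le_one (by positivity)).2 hq)

theorem hasDerivAt_logProfile_sq (ha : 0 < a) (hb : 0 < b) (r : ℝ) :
    HasDerivAt (fun r ↦ logProfile a b (r ^ 2))
      (r * ((b - a) / ((r ^ 2 + a) * (r ^ 2 + b)))) r := by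
  have hcomp := HasDerivAt.comp (h := fun r ↦ r ^ 2) r
    (hasDerivAt_logProfile ha hb (sq_nonneg r)) (hasDerivAt_pow 2 r)
  refine hcomp.congr_deriv ?_
  simp only [Nat.cast_ofNat, Nat.add_one_sub_one, pow_one]
  field_simp

theorem lintegral_ofReal_logProfile_density (ha : 0 < a) (hab : a ≤ b) :
    ∫⁻ w : ℂ, .ofReal ((b - a) / ((‖w‖ ^ 2 + a) * (‖w‖ ^ 2 + b))) =
      .ofReal (π * Real.log (b / a)) := by
  have hb : 0 < b := ha.trans_le hab
  have hpos (r : ℝ) : 0 ≤ (b - a) / ((r ^ 2 + a) * (r ^ 2 + b)) :=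
    div_nonneg (sub_nonneg.2 hab) (by positivity)
  have hderiv (r : ℝ) (_ : r ∈ Ici 0) := hasDerivAt_logProfile_sq ha hb r
  have hnonneg (r : ℝ) (hr : r ∈ Ioi 0) := mul_nonneg (mem_Ioi.1 hr).le (hpos r)
  have hlim : Tendsto (fun r : ℝ ↦ logProfile a b (r ^ 2)) atTop (𝓝 0) :=
    (tendsto_logProfile_atTop a b).comp (tendsto_pow_atTop two_ne_zero)
  have hinteg := integrableOn_Ioi_deriv_of_nonneg' hderiv hnonneg hlim
  have hradial := integral_Ioi_of_hasDerivAt_of_nonneg' hderiv hnonneg hlim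
  rw [← ofReal_integral_eq_lintegral_ofReal ((integrable_fun_norm_addHaar volume
      (f := fun r ↦ (b - a) / ((r ^ 2 + a) * (r ^ 2 + b)))).2 (by simpa using hinteg))
      (.of_forall fun w ↦ hpos ‖w‖),
    integral_fun_norm_addHaar volume fun r ↦ (b - a) / ((r ^ 2 + a) * (r ^ 2 + b))]
  simp only [finrank_real_complex, Nat.add_one_sub_one, pow_one, smul_eq_mul, hradial]
  congr 1
  simp only [Measure.real, volume_ball, logProfile, Real.log_div hb.ne' ha.ne', ENNReal.ofReal_one,
    one_pow, one_mul, ENNReal.coe_toReal, NNReal.coe_real_pi, zero_pow two_ne_zero, zero_add,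
    nsmul_eq_mul, Nat.cast_ofNat]
  ring

theorem lintegral_enorm_fderiv_logProfile_sq_le (ha : 0 < a) (hab : a ≤ b) (ζ : ℂ) :
    ∫⁻ w, ‖fderiv ℝ (fun w ↦ logProfile a b (‖w - ζ‖ ^ 2)) w‖ₑ ^ 2 ≤
      .ofReal (π * Real.log (b / a)) := by
  rw [← lintegral_ofReal_logProfile_density ha hab,
    ← lintegral_sub_right_eq_self (fun w ↦ .ofReal ((b - a) / ((‖w‖ ^ 2 + a) * (‖w‖ ^ 2 + b)))) ζ]
  refine lintegral_mono fun w ↦ ?_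
  rw [← ofReal_norm, ← ENNReal.ofReal_pow (norm_nonneg _)]
  exact ENNReal.ofReal_le_ofReal (norm_fderiv_logProfile_norm_sub_sq_sq_le ha hab ζ w)

end LogProfile

section Distortion

theorem volume_ball_eq_ofReal (z : ℂ) {r : ℝ} (hr : 0 ≤ r) :
    volume (ball z r) = .ofReal (r ^ 2 * π) := by
  rw [Complex.volume_ball, ENNReal.ofReal_mul (by positivity), ENNReal.ofReal_pow hr,
    ← NNReal.coe_real_pi, ENNReal.ofReal_coe_nnreal]

theorem le_four_add_of_half_sub_log_two_le {k x y : ℝ} (hk : 0 ≤ k)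
    (hxy : y / 2 - Real.log 2 ≤ x) (hx : x ^ 2 ≤ k * y) : y ≤ 4 + 4 * k := by
  by_contra! hy
  have hsq : (y / 2 - 1) ^ 2 ≤ x ^ 2 :=
    pow_le_pow_left₀ (by linarith) (by linarith [Real.log_two_lt_d9]) 2
  nlinarith

namespace IsQuasiconformalWith

variable {G : ℂ ≃ₜ ℂ} {D : ℂ → ℂ →L[ℝ] ℂ} {C : ℝ≥0} {ξ : ℂ} {s ρ : ℝ}

theorem setLIntegral_enorm_sq_le (h : IsQuasiconformalWith G D C) {A : Set ℂ}
    (hA : MeasurableSet A) : ∫⁻ z in A, ‖D z‖ₑ ^ 2 ≤ C * volume (G '' A) := by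
  simpa using h.setLIntegral_comp_mul_le hA (p := 1) measurable_one

theorem sq_logProfile_sub_le (h : IsQuasiconformalWith G D C) (hs : 0 < s) {z₀ z₁ : ℂ}
    (hz₀ : z₀ ∈ sphere ξ s) (hz₁ : z₁ ∈ sphere ξ s) {a b : ℝ} (ha : 0 < a) (hab : a ≤ b)
    (hza : ‖G z₀ - G ξ‖ ^ 2 ≤ a) (hzb : b ≤ ‖G z₁ - G ξ‖ ^ 2) :
    (logProfile a b b - logProfile a b a) ^ 2 ≤ 90 * π * C * Real.log (b / a) := by
  have hb : 0 < b := ha.trans_le hab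
  have hmono := monotoneOn_logProfile ha hab
  have hT : ContDiff ℝ ∞ fun w ↦ logProfile a b (‖w - G ξ‖ ^ 2) :=
    contDiff_logProfile_norm_sub_sq ha hb (G ξ)
  have hlog : 0 ≤ Real.log (b / a) := Real.log_nonneg ((one_le_div ha).2 hab)
  have hinner (r) (hr : r ∈ Ioo (s / 2) s) :
      ∃ p ∈ sphere ξ r, logProfile a b (‖G p - G ξ‖ ^ 2) ≤ logProfile a b a := by
    obtain ⟨p, hp, hle⟩ := exists_mem_sphere_norm_sub_le G ((half_pos hs).trans hr.1).le
      (hr.2.le.trans_eq (mem_sphere.1 hz₀).symm)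
    exact ⟨p, hp, hmono (mem_Ici.2 (sq_nonneg _)) ha.le (le_trans (by gcongr) hza)⟩
  have houter (r) (hr : r ∈ Ioo s (2 * s)) :
      ∃ p ∈ sphere ξ r, logProfile a b b ≤ logProfile a b (‖G p - G ξ‖ ^ 2) := by
    obtain ⟨p, hp, hle⟩ := exists_mem_sphere_le_norm_sub G
      ((mem_sphere.1 hz₁).trans_le hr.1.le) (G.injective.ne (ne_of_mem_sphere hz₁ hs.ne'))
    exact ⟨p, hp, hmono hb.le (mem_Ici.2 (sq_nonneg _)) (hzb.trans (by gcongr))⟩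
  have henergy := (h.hasStrongFDeriv.comp_contDiff hT).ofReal_sq_sub_le hs
    (hmono ha.le hb.le hab) hinner houter
  rw [← ENNReal.ofReal_le_ofReal_iff (by positivity)]
  calc ENNReal.ofReal ((logProfile a b b - logProfile a b a) ^ 2)
      ≤ 90 * (C * .ofReal (π * Real.log (b / a))) := by
        refine henergy.trans (mul_le_mul_right ((h.setLIntegral_comp_deriv_le measurableSet_ball
          hT).trans (mul_le_mul_right ?_ _)) _)
        exact (setLIntegral_le_lintegral _ _).trans
          (lintegral_enorm_fderiv_logProfile_sq_le ha hab (G ξ))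
    _ = .ofReal (90 * π * C * Real.log (b / a)) := by
        rw [← ENNReal.ofReal_ofNat, ← ENNReal.ofReal_coe_nnreal,
          ← ENNReal.ofReal_mul (by positivity), ← ENNReal.ofReal_mul (by positivity)]
        ring_nf

theorem norm_sub_le_exp_mul_norm_sub (h : IsQuasiconformalWith G D C) (hs : 0 < s) {z₀ z₁ : ℂ}
    (hz₀ : z₀ ∈ sphere ξ s) (hz₁ : z₁ ∈ sphere ξ s) :
    ‖G z₁ - G ξ‖ ≤ Real.exp (2 + 180 * π * C) * ‖G z₀ - G ξ‖ := by
  obtain hle | hlt := le_or_gt ‖G z₁ - G ξ‖ ‖G z₀ - G ξ‖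
  · exact hle.trans (le_mul_of_one_le_left (norm_nonneg _) (Real.one_le_exp (by positivity)))
  have hpos : 0 < ‖G z₀ - G ξ‖ :=
    norm_sub_pos_iff.2 (G.injective.ne (ne_of_mem_sphere hz₀ hs.ne'))
  have hsq := pow_le_pow_left₀ hpos.le hlt.le 2
  have hlog := le_four_add_of_half_sub_log_two_le (by positivity)
    (half_log_div_sub_log_two_le_logProfile_sub (pow_pos hpos 2) (pow_pos (hpos.trans hlt) 2))
    (h.sq_logProfile_sub_le hs hz₀ hz₁ (pow_pos hpos 2) hsq le_rfl le_rfl)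
  rw [← div_pow, Real.log_pow] at hlog
  push_cast at hlog
  rw [← div_le_iff₀ hpos, ← Real.log_le_iff_le_exp (div_pos (hpos.trans hlt) hpos)]
  linarith

theorem norm_sub_sq_mul_log_le (h : IsQuasiconformalWith G D C) {a : ℝ} (ha : 0 < a) (has : a ≤ s)
    {z : ℂ} (hz : z ∈ sphere ξ a) (hρ : 0 ≤ ρ) (hsub : G '' ball ξ s ⊆ ball (G ξ) ρ) :
    ‖G z - G ξ‖ ^ 2 * Real.log (s / a) ≤ 2 * π ^ 2 * C * ρ ^ 2 := by
  have hring := h.hasStrongFDeriv.ofReal_sq_mul_log_le ha has (norm_nonneg (G z - G ξ)) fun r hr ↦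
    exists_mem_sphere_mem_sphere_le_norm_sub G ((mem_sphere.1 hz).trans_le hr.1.le)
      (G.injective.ne (ne_of_mem_sphere hz ha.ne'))
  rw [← ENNReal.ofReal_le_ofReal_iff (by positivity)]
  calc .ofReal (‖G z - G ξ‖ ^ 2 * Real.log (s / a))
      ≤ .ofReal (2 * π) * (C * volume (ball (G ξ) ρ)) := by
        refine hring.trans (mul_le_mul_right ((lintegral_mono_set sdiff_subset).trans
          ((h.setLIntegral_enorm_sq_le measurableSet_ball).trans ?_)) _)
        gcongr
    _ = .ofReal (2 * π ^ 2 * C * ρ ^ 2) := by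
        rw [volume_ball_eq_ofReal _ hρ, ← ENNReal.ofReal_coe_nnreal,
          ← ENNReal.ofReal_mul (by positivity), ← ENNReal.ofReal_mul (by positivity)]
        ring_nf

theorem exists_forall_mem_sphere_norm_sub_le (h : IsQuasiconformalWith G D C) {ε : ℝ}
    (hε : 0 < ε) :
    ∃ k ≥ 1, ∀ ξ : ℂ, ∀ s > 0, ∀ ρ ≥ 0, G '' ball ξ s ⊆ ball (G ξ) ρ →
      ∀ z ∈ sphere ξ (s / k), ‖G z - G ξ‖ ≤ ε * ρ := by
  set K := 2 * π ^ 2 * C / ε ^ 2 + 1 with hK_def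
  have hK : 0 < K := by positivity
  have hk : 1 ≤ Real.exp K := Real.one_le_exp hK.le
  refine ⟨Real.exp K, hk, fun ξ s hs ρ hρ hsub z hz ↦ ?_⟩
  have hlog := h.norm_sub_sq_mul_log_le (by positivity) (div_le_self hs.le hk) hz hρ hsub
  rw [div_div_cancel₀ hs.ne', Real.log_exp] at hlog
  have hεK : 2 * π ^ 2 * C ≤ ε ^ 2 * K := by
    rw [hK_def, mul_add, mul_div_cancel₀ _ (by positivity)]
    linarith [sq_nonneg ε]
  refine (sq_le_sq₀ (norm_nonneg _) (by positivity)).1 (le_of_mul_le_mul_right ?_ hK)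
  calc ‖G z - G ξ‖ ^ 2 * K ≤ 2 * π ^ 2 * C * ρ ^ 2 := hlog
    _ ≤ ε ^ 2 * K * ρ ^ 2 := by gcongr
    _ = (ε * ρ) ^ 2 * K := by ring

theorem exists_forall_mul_le_norm_sub (h : IsQuasiconformalWith G D C) :
    ∃ ε > 0, ∃ k ≥ 1, ∀ ξ, ∀ ρ > 0, ∃ s > 0, G '' ball ξ s ⊆ ball (G ξ) ρ ∧
      ∀ p ∈ sphere ξ s, ∀ q ∈ sphere ξ (s / k), ε * ρ ≤ ‖G p - G q‖ := by
  set H : ℝ := Real.exp (2 + 180 * π * C)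
  have hH : 0 < H := Real.exp_pos _
  have hε : 0 < (2 * H)⁻¹ := by positivity
  obtain ⟨k, hk, hnear⟩ := h.exists_forall_mem_sphere_norm_sub_le hε
  refine ⟨(2 * H)⁻¹, hε, k, hk, fun ξ ρ hρ ↦ ?_⟩
  obtain ⟨s, hs, hsub, z, hz, hρz⟩ := exists_image_ball_subset_ball G ξ hρ
  refine ⟨s, hs, hsub, fun p hp q hq ↦ ?_⟩
  have hfar : H⁻¹ * ρ ≤ ‖G p - G ξ‖ :=
    (inv_mul_le_iff₀ hH).2 (hρz.trans (h.norm_sub_le_exp_mul_norm_sub hs hp hz))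
  have hsplit : H⁻¹ * ρ = (2 * H)⁻¹ * ρ + (2 * H)⁻¹ * ρ := by field_simp; ring
  linarith [hnear ξ s hs ρ hρ.le hsub q hq, norm_sub_le_norm_sub_add_norm_sub (G p) (G q) (G ξ)]

end IsQuasiconformalWith

end Distortion

section ExteriorHalfDisc

/-- The half of the disc `ball ξ s` cut off by the tangent line at `ξ` to the circle of centre `0`
through `ξ`, on the side away from `0`. -/
def exteriorHalfDisc (ξ : ℂ) (s : ℝ) : Set ℂ := ball ξ s ∩ {z | 0 < ((z - ξ) * conj ξ).re}

variable {ξ : ℂ} {s : ℝ}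

theorem isOpen_exteriorHalfDisc : IsOpen (exteriorHalfDisc ξ s) :=
  isOpen_ball.inter (isOpen_lt continuous_const (by fun_prop))

theorem exteriorHalfDisc_subset_ball : exteriorHalfDisc ξ s ⊆ ball ξ s := inter_subset_left

theorem disjoint_exteriorHalfDisc_ball : Disjoint (exteriorHalfDisc ξ s) (ball 0 ‖ξ‖) := by
  refine disjoint_left.2 fun z hz hball ↦ ?_
  have hlt : ‖z‖ ^ 2 < ‖ξ‖ ^ 2 := by
    gcongr
    exact mem_ball_zero_iff.1 hball
  have hexpand : ‖z‖ ^ 2 = ‖ξ‖ ^ 2 + 2 * ((z - ξ) * conj ξ).re + ‖z - ξ‖ ^ 2 := by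
    simp only [Complex.sq_norm, normSq_apply, mul_re, sub_re, sub_im, conj_re, conj_im]
    ring
  have hside : 0 < ((z - ξ) * conj ξ).re := hz.2
  linarith [sq_nonneg ‖z - ξ‖]

theorem circleMap_mem_exteriorHalfDisc (hξ : ξ ≠ 0) {r θ : ℝ} (hr : r ∈ Ioo 0 s)
    (hθ : θ ∈ Ioo (arg ξ - π / 2) (arg ξ + π / 2)) : circleMap ξ r θ ∈ exteriorHalfDisc ξ s := by
  refine ⟨mem_ball.2 ((mem_sphere.1 (circleMap_mem_sphere ξ hr.1.le θ)).trans_lt hr.2), ?_⟩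
  have hre : ((circleMap ξ r θ - ξ) * conj ξ).re = r * ‖ξ‖ * Real.cos (θ - arg ξ) := by
    rw [Real.cos_sub, circleMap, add_sub_cancel_left, mul_re, conj_re, conj_im, re_ofReal_mul,
      im_ofReal_mul, exp_ofReal_mul_I_re, exp_ofReal_mul_I_im, ← norm_mul_cos_arg ξ,
      ← norm_mul_sin_arg ξ]
    ring
  change 0 < ((circleMap ξ r θ - ξ) * conj ξ).re
  rw [hre]
  have hcos := Real.cos_pos_of_mem_Ioo (x := θ - arg ξ) ⟨by linarith [hθ.1], by linarith [hθ.2]⟩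
  have := norm_pos_iff.2 hξ
  have := hr.1
  positivity

namespace IsQuasiconformalWith

variable {G : ℂ ≃ₜ ℂ} {D : ℂ → ℂ →L[ℝ] ℂ} {C : ℝ≥0}

theorem ofReal_sq_mul_pi_le_volume_image (h : IsQuasiconformalWith G D C) (hξ : ξ ≠ 0) {a l : ℝ}
    (ha : 0 < a) (has : a ≤ s) (hl : 0 ≤ l)
    (hosc : ∀ p ∈ sphere ξ s, ∀ q ∈ sphere ξ a, l ≤ ‖G p - G q‖) :
    .ofReal (l ^ 2 * π) ≤ .ofReal (s / a) * (C * volume (G '' exteriorHalfDisc ξ s)) := by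
  have hsector := h.hasStrongFDeriv.ofReal_sq_mul_sub_le (α := arg ξ - π / 2)
    (β := arg ξ + π / 2) ha has hl (by linarith [Real.pi_pos])
    isOpen_exteriorHalfDisc.measurableSet exteriorHalfDisc_subset_ball
    (fun r hr θ hθ ↦ circleMap_mem_exteriorHalfDisc hξ ⟨ha.trans hr.1, hr.2⟩ hθ)
    fun θ _ ↦ hosc _ (circleMap_mem_sphere ξ (ha.le.trans has) θ) _
      (circleMap_mem_sphere ξ ha.le θ)
  rw [add_sub_sub_cancel, add_halves] at hsector
  refine hsector.trans ?_
  gcongr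
  exact h.setLIntegral_enorm_sq_le isOpen_exteriorHalfDisc.measurableSet

theorem exists_volume_ball_le_mul_volume_image (h : IsQuasiconformalWith G D C) :
    ∃ k : ℝ≥0, 0 < k ∧ ∀ ξ ≠ 0, ∀ ρ > 0, ∃ s, G '' exteriorHalfDisc ξ s ⊆ ball (G ξ) ρ ∧
      volume (ball (G ξ) ρ) ≤ k * volume (G '' exteriorHalfDisc ξ s) := by
  obtain ⟨ε, hε, m, hm, hosc⟩ := h.exists_forall_mul_le_norm_sub
  have hm₀ : 0 < m := by linarith
  obtain ⟨k, hk₀, hk⟩ : ∃ k : ℝ≥0, 0 < k ∧ .ofReal ((ε ^ 2)⁻¹ * m) * (C : ℝ≥0∞) ≤ k :=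
    ⟨((ε ^ 2)⁻¹ * m).toNNReal * C + 1, by positivity, by
      rw [ENNReal.ofReal, ← ENNReal.coe_mul]
      exact ENNReal.coe_le_coe.2 le_self_add⟩
  refine ⟨k, hk₀, fun ξ hξ ρ hρ ↦ ?_⟩
  obtain ⟨s, hs, hsub, hoscρ⟩ := hosc ξ ρ hρ
  refine ⟨s, (image_mono exteriorHalfDisc_subset_ball).trans hsub, ?_⟩
  have hsector := h.ofReal_sq_mul_pi_le_volume_image hξ (div_pos hs hm₀) (div_le_self hs.le hm)
    (by positivity) hoscρ
  rw [div_div_cancel₀ hs.ne'] at hsector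
  calc volume (ball (G ξ) ρ) = .ofReal (ε ^ 2)⁻¹ * .ofReal ((ε * ρ) ^ 2 * π) := by
        rw [volume_ball_eq_ofReal _ hρ.le, ← ENNReal.ofReal_mul (by positivity)]
        congr 1
        field_simp
    _ ≤ .ofReal (ε ^ 2)⁻¹ * (.ofReal m * (C * volume (G '' exteriorHalfDisc ξ s))) := by
        gcongr
    _ = .ofReal ((ε ^ 2)⁻¹ * m) * C * volume (G '' exteriorHalfDisc ξ s) := by
        rw [ENNReal.ofReal_mul (by positivity)]
        ring
    _ ≤ k * volume (G '' exteriorHalfDisc ξ s) := by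
        gcongr

end IsQuasiconformalWith

end ExteriorHalfDisc

theorem measure_inter_le_of_measure_le_mul {α : Type*} [MeasurableSpace α] {μ : Measure α}
    {A B S : Set α} (hS : MeasurableSet S) (hSB : S ⊆ B) (hSA : Disjoint S A) {k : ℝ≥0}
    (hk : μ B ≤ k * μ S) : μ (A ∩ B) ≤ (k / (k + 1) : ℝ≥0) * μ B := by
  have hadd : μ (A ∩ B) + μ S ≤ μ B := by
    rw [← measure_union (hSA.symm.mono_left inter_subset_left) hS]
    exact measure_mono (union_subset inter_subset_right hSB)
  have hmul : ((k + 1 : ℝ≥0) : ℝ≥0∞) * μ (A ∩ B) ≤ k * μ B :=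
    calc ((k + 1 : ℝ≥0) : ℝ≥0∞) * μ (A ∩ B) = k * μ (A ∩ B) + μ (A ∩ B) := by
          push_cast
          ring
      _ ≤ k * μ (A ∩ B) + k * μ S := by
          gcongr
          exact (measure_mono inter_subset_right).trans hk
      _ ≤ k * μ B := by
          rw [← mul_add]
          gcongr
  have hk₁ : k + 1 ≠ 0 := by positivity
  rw [ENNReal.coe_div hk₁, ENNReal.div_eq_inv_mul, mul_assoc, ← ENNReal.div_eq_inv_mul,
    ENNReal.le_div_iff_mul_le (by simp) (by simp), mul_comm]
  exact hmul

theorem quasidisk_A_condition_general {f : ℂ → ℂ} (hf : IsQCOfPlane f) :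
    ∃ Θ₀ ∈ Ioo (0 : ℝ) 1, ∀ ζ ∈ frontier (f '' ball 0 1), ∀ ρ > 0,
      volume (f '' ball 0 1 ∩ ball ζ ρ) ≤ .ofReal Θ₀ * volume (ball ζ ρ) := by
  obtain ⟨G, rfl, D, C, hG⟩ := hf.exists_isQuasiconformalWith
  obtain ⟨k, hk, hvolume⟩ := hG.exists_volume_ball_le_mul_volume_image
  refine ⟨(k / (k + 1) : ℝ≥0), ⟨by positivity, ?_⟩, fun ζ hζ ρ hρ ↦ ?_⟩
  · exact_mod_cast (div_lt_one (by positivity)).2 (lt_add_one k)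
  rw [← G.image_frontier, frontier_ball _ one_ne_zero] at hζ
  obtain ⟨ξ, hξ, rfl⟩ := hζ
  obtain ⟨s, hsub, hle⟩ := hvolume ξ (ne_zero_of_mem_unit_sphere ⟨ξ, hξ⟩) ρ hρ
  have hdisj : Disjoint (G '' exteriorHalfDisc ξ s) (G '' ball 0 1) := by
    rw [disjoint_image_iff G.injective, ← mem_sphere_zero_iff_norm.1 hξ]
    exact disjoint_exteriorHalfDisc_ball
  rw [ENNReal.ofReal_coe_nnreal]
  exact measure_inter_le_of_measure_le_mul
    (G.isOpenMap _ isOpen_exteriorHalfDisc).measurableSet hsub hdisj hle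

/-- every quasidisk satisfies the (A)-condition. -/
theorem quasidisk_A_condition (f : ℂ → ℂ) (hf : IsQCOfPlane f) :
    ∃ Θ₀ ∈ Set.Ioo (0 : ℝ) 1, ∃ ρ₀ ∈ Set.Ioo (0 : ℝ) 1,
      ∀ ζ ∈ frontier (f '' Metric.ball 0 1), ∀ ρ : ℝ, 0 < ρ → ρ ≤ ρ₀ →
        volume ((f '' Metric.ball 0 1) ∩ Metric.ball ζ ρ) ≤
          ENNReal.ofReal Θ₀ * volume (Metric.ball ζ ρ) := by
  obtain ⟨Θ₀, hΘ₀, hle⟩ := quasidisk_A_condition_general hf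
  exact ⟨Θ₀, hΘ₀, 1 / 2, by norm_num, fun ζ hζ ρ hρ _ ↦ hle ζ hζ ρ hρ⟩
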